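/- Let p ∈ (0,1) be fixed and m ≥ 5 a fixed integer. With high probability, in G(n,p) there exists a 1-factor {S_1,…,S_ℓ} with ℓ = (n/(2·log_{1/(1−p)} n))·(1+o(1)) such that the set of central vertices of S_1,…,S_ℓ induces a subgraph of G(n,p) that contains an induced C_{m−2}-factor. -/

import Mathlib

open MeasureTheory Filter Real

/-- The index type of potential edges of a graph on `Fin n`. -/
abbrev EdgeType (n : ℕ) := {e : Sym2 (Fin n) // ¬ e.IsDiag}

/-- The product Bernoulli measure on edge-indicator functions: the binomial
random graph `G(n,p)`. -/
noncomputable def erMeasure (n : ℕ) (p : ℝ) : Measure (EdgeType n → Bool) :=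
  Measure.pi fun _ => (PMF.bernoulli (min (Real.toNNReal p) 1) (min_le_right _ _)).toMeasure

/-- The simple graph determined by an edge-indicator function. -/
def graphOf {n : ℕ} (ω : EdgeType n → Bool) : SimpleGraph (Fin n) :=
  SimpleGraph.fromEdgeSet {e | ∃ h : ¬ e.IsDiag, ω ⟨e, h⟩ = true}

/-- `H` contains a (not necessarily induced) copy of `F`. -/
def ContainsCopy {α β : Type*} (F : SimpleGraph α) (H : SimpleGraph β) : Prop :=
  ∃ f : α → β, Function.Injective f ∧ ∀ ⦃a b⦄, F.Adj a b → H.Adj (f a) (f b)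

/-- `H` is `F`-saturated in `G`: `H` is a spanning subgraph of `G` that is `F`-free,
and adding any edge of `G` missing from `H` creates a copy of `F`. -/
def IsSaturatedIn {V : Type*} {α : Type*} (G H : SimpleGraph V) (F : SimpleGraph α) : Prop :=
  H ≤ G ∧ ¬ ContainsCopy F H ∧
    ∀ v w : V, G.Adj v w → ¬ H.Adj v w →
      ContainsCopy F (H ⊔ SimpleGraph.fromEdgeSet {s(v, w)})

/-- The saturation number `sat(G,F)`: the minimum number of edges of an
`F`-saturated spanning subgraph of `G`. -/
noncomputable def satNum {V α : Type*} (G : SimpleGraph V) (F : SimpleGraph α) : ℕ :=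
  sInf {k | ∃ H : SimpleGraph V, IsSaturatedIn G H F ∧ H.edgeSet.ncard = k}

/-- The cycle `C_m`, as a graph on `ZMod m`. -/
def cycGraph (m : ℕ) : SimpleGraph (ZMod m) :=
  SimpleGraph.fromRel (fun a b => a = b + 1)

/-- A `v`-factor in a graph `Γ` on `Fin n`, given by `ℓ` stars with centers `c i`
and leaf sets `L i`: the stars are induced, pairwise vertex-disjoint, their
centers are adjacent to `v`, and their vertex sets partition `[n] ∖ {v}`. -/
def IsStarFactor {n : ℕ} (Γ : SimpleGraph (Fin n)) (v : Fin n) (ℓ : ℕ)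
    (c : Fin ℓ → Fin n) (L : Fin ℓ → Set (Fin n)) : Prop :=
  (∀ i, Γ.Adj v (c i)) ∧
  (∀ i, c i ∉ L i) ∧
  (∀ i, ∀ x ∈ L i, Γ.Adj (c i) x) ∧
  (∀ i, (L i).Pairwise fun x y => ¬ Γ.Adj x y) ∧
  (Set.univ : Set (Fin ℓ)).PairwiseDisjoint (fun i => insert (c i) (L i)) ∧
  (⋃ i, insert (c i) (L i)) = {v}ᶜ

/-- The set `C` carries an induced `C_k`-factor in `Γ`: `C` can be partitioned
into parts, each inducing (in `Γ`) a copy of the cycle on `k` vertices. -/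
def HasInducedCycleFactorOn {n : ℕ} (Γ : SimpleGraph (Fin n)) (k : ℕ)
    (C : Set (Fin n)) : Prop :=
  ∃ (t : ℕ) (g : Fin t → ZMod k → Fin n),
    (∀ i, Function.Injective (g i)) ∧
    (Set.univ : Set (Fin t)).PairwiseDisjoint (fun i => Set.range (g i)) ∧
    (⋃ i, Set.range (g i)) = C ∧
    ∀ i a b, Γ.Adj (g i a) (g i b) ↔ (cycGraph k).Adj a b

/-!
Put `b = 1 / (1 - p)`. By Janson's inequality, a fixed set of about `n / log n` vertices misses an
independent set of size `r`, slightly below `2 * log_b n`, with probability at most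
`exp (-4 * n + 1 / 2)`; this beats the number `2 ^ n` of sets. Fix in advance disjoint tuples of
vertices. By Hoeffding's inequality a constant proportion of them are induced copies of `F` joined
to `v`, and for every other vertex `u` a constant proportion are joined to `u` as well. As long as
many vertices are not yet covered, some unused centre has many neighbours among them, hence is the
centre of an induced star with `r` leaves. About `n / r` such greedy stars cover all but a few
vertices, and each of these remaining vertices gets its own centre in a separate, much smaller
reserve of copies, since it is joined to more copies of the reserve than there are such vertices.
-/

open ProbabilityTheory

section ProductMeasure

variable {ι : Type*}

lemma dependsOn_mem_cylinder {X : ι → Type*} (F : Finset ι) (x : ∀ i, X i) :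
    DependsOn (· ∈ {ω | ∀ e ∈ F, ω e = x e}) (F : Set ι) := fun ω ω' h => by
  simp only [Set.mem_ofPred_eq, eq_iff_iff]
  exact forall₂_congr fun e he => by rw [h e he]

lemma dependsOn_mem_biInter {X : ι → Type*} {α : Type*} {A : α → Set (∀ i, X i)}
    {S : α → Set ι} {s : Finset α} (h : ∀ a ∈ s, DependsOn (· ∈ A a) (S a)) :
    DependsOn (· ∈ ⋂ a ∈ s, A a) (⋃ a ∈ s, S a) := fun ω ω' hω => by
  simp only [Set.mem_iInter, eq_iff_iff]
  exact forall₂_congr fun a ha =>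
    iff_of_eq (h a ha fun i hi => hω i (Set.mem_biUnion (t := S) ha hi))

variable [Fintype ι] {ν : ι → Measure Bool} [∀ i, IsProbabilityMeasure (ν i)]

lemma measureReal_pi_cylinder (F : Finset ι) (x : ι → Bool) :
    (Measure.pi ν).real {ω | ∀ e ∈ F, ω e = x e} = ∏ e ∈ F, (ν e).real {x e} := by
  classical
  have hset : {ω : ι → Bool | ∀ e ∈ F, ω e = x e} =
      Set.univ.pi fun e => if e ∈ F then {x e} else Set.univ := by
    ext ω
    simp only [Set.mem_ofPred_eq, Set.mem_univ_pi]
    refine forall_congr' fun e => ?_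
    by_cases he : e ∈ F <;> simp [he]
  rw [measureReal_def, hset, Measure.pi_pi, ENNReal.toReal_prod,
    ← Finset.prod_subset F.subset_univ fun e _ he => by rw [if_neg he, measure_univ]; rfl]
  exact Finset.prod_congr rfl fun e he => by rw [if_pos he, measureReal_def]

lemma measureReal_pi_singleton (ω : ι → Bool) :
    (Measure.pi ν).real {ω} = ∏ e, (ν e).real {ω e} := by
  simp [measureReal_def, Measure.pi_singleton, ENNReal.toReal_prod]

lemma measure_pi_inter_of_dependsOn_disjoint {A B : Set (ι → Bool)} {S T : Set ι}
    (hA : DependsOn (· ∈ A) S) (hB : DependsOn (· ∈ B) T) (hST : Disjoint S T) :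
    Measure.pi ν (A ∩ B) = Measure.pi ν A * Measure.pi ν B := by
  classical
  lift S to Finset ι using S.toFinite
  lift T to Finset ι using T.toFinite
  obtain ⟨f, hf⟩ := dependsOn_iff_exists_comp.1 hA
  obtain ⟨g, hg⟩ := dependsOn_iff_exists_comp.1 hB
  have hblocks := (iIndepFun_pi (μ := ν) (X := fun _ x => x) fun _ => aemeasurable_id)
    |>.indepFun_finset S T (Finset.disjoint_coe.1 hST) measurable_pi_apply
  have hA' : A = (fun (ω : ι → Bool) (i : S) => ω i) ⁻¹' {y | f y} := by
    ext ω; exact iff_of_eq (congrFun hf ω)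
  have hB' : B = (fun (ω : ι → Bool) (i : T) => ω i) ⁻¹' {y | g y} := by
    ext ω; exact iff_of_eq (congrFun hg ω)
  rw [hA', hB']
  exact hblocks.measure_inter_preimage_eq_mul _ _ .of_discrete .of_discrete

lemma iIndepSet_pi_of_dependsOn {α : Type*} {A : α → Set (ι → Bool)} {S : α → Set ι}
    (hA : ∀ a, DependsOn (· ∈ A a) (S a)) (hS : Pairwise (Function.onFun Disjoint S)) :
    iIndepSet A (Measure.pi ν) := by
  classical
  rw [iIndepSet_iff_meas_biInter fun _ => .of_discrete]
  intro s
  induction s using Finset.induction_on with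
  | empty => simp
  | insert a s ha ih =>
    rw [Finset.set_biInter_insert, Finset.prod_insert ha, ← ih]
    refine measure_pi_inter_of_dependsOn_disjoint (hA a)
      (dependsOn_mem_biInter fun b _ => hA b) (Set.disjoint_iUnion₂_right.2 fun b hb => hS ?_)
    rintro rfl
    exact ha hb

lemma sum_measureReal_singleton_mul_ite {Ω : Type*} [Fintype Ω] [MeasurableSpace Ω]
    [MeasurableSingletonClass Ω] (μ : Measure Ω) [SigmaFinite μ] (A : Set Ω)
    [DecidablePred (· ∈ A)] :
    ∑ ω, μ.real {ω} * (if ω ∈ A then 1 else 0) = μ.real A := by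
  simp only [mul_ite, mul_one, mul_zero, ← Finset.sum_filter, sum_measureReal_singleton]
  simp

lemma measureReal_pi_mul_le_inter_of_isUpperSet {A B : Set (ι → Bool)}
    (hA : IsUpperSet A) (hB : IsUpperSet B) :
    (Measure.pi ν).real A * (Measure.pi ν).real B ≤ (Measure.pi ν).real (A ∩ B) := by
  classical
  set μ := Measure.pi ν
  have hmono : ∀ {C : Set (ι → Bool)}, IsUpperSet C →
      Monotone fun ω => if ω ∈ C then (1 : ℝ) else 0 := fun {C} hC ω ω' h => by
    dsimp only
    split_ifs with h1 h2
    exacts [le_rfl, absurd (hC h h1) h2, zero_le_one, le_rfl]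
  have hnonneg : ∀ C : Set (ι → Bool), 0 ≤ fun ω => if ω ∈ C then (1 : ℝ) else 0 :=
    fun C ω => by dsimp only [Pi.zero_apply]; split_ifs <;> norm_num
  have hlattice : ∀ ω ω', μ.real {ω} * μ.real {ω'} ≤ μ.real {ω ⊓ ω'} * μ.real {ω ⊔ ω'} := by
    intro ω ω'
    simp only [μ, measureReal_pi_singleton, ← Finset.prod_mul_distrib]
    refine (Finset.prod_congr rfl fun e _ => ?_).le
    cases h : ω e <;> cases h' : ω' e <;> simp [h, h', mul_comm]
  have hfkg := fkg _ _ (fun ω => μ.real {ω}) (fun _ => measureReal_nonneg) (hnonneg A)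
    (hnonneg B) (hmono hA) (hmono hB) hlattice
  simpa only [ite_zero_mul_ite_zero, mul_one, ← Set.mem_inter_iff,
    sum_measureReal_singleton_mul_ite, sum_measureReal_singleton, Finset.coe_univ, probReal_univ,
    one_mul] using hfkg

lemma measureReal_pi_inter_le_of_isLowerSet_of_isUpperSet {A B : Set (ι → Bool)}
    (hA : IsLowerSet A) (hB : IsUpperSet B) :
    (Measure.pi ν).real (A ∩ B) ≤ (Measure.pi ν).real A * (Measure.pi ν).real B := by
  have hcorr := measureReal_pi_mul_le_inter_of_isUpperSet (ν := ν) hA.compl hB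
  have hsplit := measureReal_inter_add_sdiff (μ := Measure.pi ν) (s := B) (t := A) .of_discrete
  rw [probReal_compl_eq_one_sub .of_discrete, Set.inter_comm, ← Set.sdiff_eq] at hcorr
  rw [Set.inter_comm] at hsplit
  linarith

end ProductMeasure

section Hoeffding

open scoped Classical in
lemma measureReal_card_le_of_iIndepSet {Ω α : Type*} [MeasurableSpace Ω] {μ : Measure Ω}
    [IsProbabilityMeasure μ] [Fintype α] {A : α → Set Ω} {δ : ℝ}
    (hmeas : ∀ a, MeasurableSet (A a)) (hA : iIndepSet A μ) (hδ : 0 ≤ δ)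
    (hδA : ∀ a, δ ≤ μ.real (A a)) :
    μ.real {ω | (Finset.card {a | ω ∈ A a} : ℝ) ≤ δ / 2 * Fintype.card α} ≤
      exp (-(δ ^ 2 / 2 * Fintype.card α)) := by
  let X : α → Ω → ℝ := fun a ω => -(A a).indicator 1 ω
  have hmean : ∀ a, ∫ ω, X a ω ∂μ = -μ.real (A a) := fun a => by
    rw [integral_neg, integral_indicator_one (hmeas a)]
  have hindep : iIndepFun (fun a ω => X a ω - ∫ ω', X a ω' ∂μ) μ :=
    hA.iIndepFun_indicator.comp (fun a y => -y - ∫ ω', X a ω' ∂μ) fun a => by fun_prop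
  have hsub : ∀ a, HasSubgaussianMGF (fun ω => X a ω - ∫ ω', X a ω' ∂μ)
      ((‖(0 : ℝ) - (-1)‖₊ / 2) ^ 2) μ := fun a => by
    refine hasSubgaussianMGF_of_mem_Icc (measurable_one.indicator (hmeas a)).neg.aemeasurable
      (.of_forall fun ω => ?_)
    by_cases h : ω ∈ A a <;> simp [X, h]
  refine (measureReal_mono fun ω hω => ?_).trans
    ((HasSubgaussianMGF.measure_sum_ge_le_of_iIndepFun hindep (s := Finset.univ)
      (fun a _ => hsub a) (ε := δ / 2 * Fintype.card α) (by positivity)).trans_eq ?_)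
  · have hcount : ∑ a, (A a).indicator (1 : Ω → ℝ) ω = (Finset.card {a | ω ∈ A a} : ℝ) := by
      simp [Set.indicator_apply]
    have hsum : Fintype.card α * δ ≤ ∑ a, μ.real (A a) := by
      simpa using Finset.card_nsmul_le_sum Finset.univ _ _ fun a _ => hδA a
    simp only [Set.mem_ofPred_eq, hmean, X, Finset.sum_sub_distrib, Finset.sum_neg_distrib,
      hcount] at hω ⊢
    linarith
  · rcases eq_or_ne (Fintype.card α : ℝ) 0 with h0 | _
    · simp [h0]
    · simp only [zero_sub, neg_neg, nnnorm_one, Finset.sum_const, Finset.card_univ, nsmul_eq_mul]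
      push_cast
      field_simp

open scoped Classical in
lemma measureReal_pi_card_filter_le {ι α : Type*} [Fintype ι] {ν : ι → Measure Bool}
    [∀ i, IsProbabilityMeasure (ν i)] {δ : ℝ} {s : Finset α} {A : α → Set (ι → Bool)}
    {S : α → Set ι} (hA : ∀ a ∈ s, DependsOn (· ∈ A a) (S a))
    (hS : (s : Set α).PairwiseDisjoint S) (hδ : 0 ≤ δ)
    (hδA : ∀ a ∈ s, δ ≤ (Measure.pi ν).real (A a)) :
    (Measure.pi ν).real {ω | (Finset.card {a ∈ s | ω ∈ A a} : ℝ) ≤ δ / 2 * s.card} ≤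
      exp (-(δ ^ 2 / 2 * s.card)) := by
  have hcard : ∀ ω, Finset.card {a : s | ω ∈ A a} = Finset.card {a ∈ s | ω ∈ A a} := fun ω => by
    rw [Finset.univ_eq_attach, Finset.filter_attach (fun a => ω ∈ A a)]
    simp
  have := measureReal_card_le_of_iIndepSet (α := s) (fun _ => .of_discrete)
    (iIndepSet_pi_of_dependsOn (ν := ν) (fun a : s => hA a a.2)
      fun a b h => hS a.2 b.2 (Subtype.coe_ne_coe.2 h)) hδ fun a => hδA a a.2
  simpa only [hcard, Fintype.card_coe] using this

end Hoeffding

section Janson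

variable {ι X : Type*}

/-- The event that every bit of `F` is `false`. -/
def allFalse (F : Finset ι) : Set (ι → Bool) := {ω | ∀ e ∈ F, ω e = false}

lemma dependsOn_mem_allFalse (F : Finset ι) : DependsOn (· ∈ allFalse F) (F : Set ι) :=
  dependsOn_mem_cylinder F fun _ => false

lemma allFalse_union [DecidableEq ι] (F G : Finset ι) :
    allFalse (F ∪ G) = allFalse F ∩ allFalse G := by
  ext ω
  simp [allFalse, or_imp, forall_and]

lemma isLowerSet_allFalse (F : Finset ι) : IsLowerSet (allFalse F) := fun _ _ hle h e he =>
  le_bot_iff.1 ((hle e).trans (h e he).le)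

/-- The event that no block of the family `E` indexed by `s` consists of `false` bits only. -/
def noneAllFalse (E : X → Finset ι) (s : Finset X) : Set (ι → Bool) := ⋂ x ∈ s, (allFalse (E x))ᶜ

lemma isUpperSet_noneAllFalse (E : X → Finset ι) (s : Finset X) :
    IsUpperSet (noneAllFalse E s) :=
  isUpperSet_iInter₂ fun x _ => (isLowerSet_allFalse (E x)).compl

lemma dependsOn_mem_noneAllFalse (E : X → Finset ι) (s : Finset X) :
    DependsOn (· ∈ noneAllFalse E s) (⋃ x ∈ s, (E x : Set ι)) :=
  dependsOn_mem_biInter fun x _ _ _ h =>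
    congrArg Not (dependsOn_mem_allFalse (E x) h)

variable [DecidableEq ι]

lemma allFalse_inter_noneAllFalse_filter_subset (E : X → Finset ι) (s : Finset X) (x : X) :
    allFalse (E x) ∩ noneAllFalse E {y ∈ s | Disjoint (E y) (E x)} ⊆
      (allFalse (E x) ∩ noneAllFalse E s) ∪ ⋃ y ∈ {y ∈ s | ¬Disjoint (E y) (E x)},
        allFalse (E y ∪ E x) ∩ noneAllFalse E {y ∈ s | Disjoint (E y) (E x)} := by
  rintro ω ⟨hx, hI⟩
  by_cases hs : ω ∈ noneAllFalse E s
  · exact .inl ⟨hx, hs⟩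
  · simp only [noneAllFalse, Set.mem_iInter, not_forall] at hs
    obtain ⟨y, hy, hyω⟩ := hs
    have hmeet : ¬Disjoint (E y) (E x) := fun hdisj =>
      hyω (Set.mem_iInter₂.1 hI y (Finset.mem_filter.2 ⟨hy, hdisj⟩))
    refine .inr (Set.mem_iUnion₂.2 ⟨y, Finset.mem_filter.2 ⟨hy, hmeet⟩, ?_, hI⟩)
    rw [allFalse_union]
    exact ⟨not_not.1 hyω, hx⟩

variable [Fintype ι] {ν : ι → Measure Bool} [∀ i, IsProbabilityMeasure (ν i)]

/- Given that the blocks disjoint from `E x` are not all-false, the block `E x` is all-false with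
its unconditional probability, while by Harris' inequality the chance that it is all-false together
with an overlapping block has not increased. -/
lemma half_mul_measureReal_noneAllFalse_filter_le (E : X → Finset ι) (s : Finset X) (x : X)
    (hover : ∑ y ∈ s with ¬Disjoint (E y) (E x), (Measure.pi ν).real (allFalse (E y ∪ E x)) ≤
      (Measure.pi ν).real (allFalse (E x)) / 2) :
    (Measure.pi ν).real (allFalse (E x)) / 2 *
        (Measure.pi ν).real (noneAllFalse E {y ∈ s | Disjoint (E y) (E x)}) ≤
      (Measure.pi ν).real (allFalse (E x) ∩ noneAllFalse E s) := by
  set μ := Measure.pi ν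
  set I : Finset X := {y ∈ s | Disjoint (E y) (E x)}
  have hindep : μ.real (allFalse (E x) ∩ noneAllFalse E I) =
      μ.real (allFalse (E x)) * μ.real (noneAllFalse E I) := by
    rw [measureReal_def, measure_pi_inter_of_dependsOn_disjoint (dependsOn_mem_allFalse _)
      (dependsOn_mem_noneAllFalse E I), ENNReal.toReal_mul, measureReal_def, measureReal_def]
    exact Set.disjoint_iUnion₂_right.2 fun y hy =>
      (Finset.disjoint_coe.2 (Finset.mem_filter.1 hy).2).symm
  have hharris : ∀ y, μ.real (allFalse (E y ∪ E x) ∩ noneAllFalse E I) ≤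
      μ.real (allFalse (E y ∪ E x)) * μ.real (noneAllFalse E I) := fun y =>
    measureReal_pi_inter_le_of_isLowerSet_of_isUpperSet (isLowerSet_allFalse _)
      (isUpperSet_noneAllFalse E I)
  have hcover := (measureReal_mono (μ := μ) (allFalse_inter_noneAllFalse_filter_subset E s x)).trans
    (measureReal_union_le _ _)
  have hover' := (measureReal_biUnion_finset_le (μ := μ) {y ∈ s | ¬Disjoint (E y) (E x)} _).trans
    (Finset.sum_le_sum fun y _ => hharris y)
  rw [← Finset.sum_mul] at hover'
  linarith [mul_le_mul_of_nonneg_right hover (measureReal_nonneg (μ := μ)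
    (s := noneAllFalse E I))]

lemma measureReal_noneAllFalse_insert_le [DecidableEq X] (E : X → Finset ι) (s : Finset X) (x : X)
    (hover : ∑ y ∈ s with ¬Disjoint (E y) (E x), (Measure.pi ν).real (allFalse (E y ∪ E x)) ≤
      (Measure.pi ν).real (allFalse (E x)) / 2) :
    (Measure.pi ν).real (noneAllFalse E (insert x s)) ≤
      (1 - (Measure.pi ν).real (allFalse (E x)) / 2) *
        (Measure.pi ν).real (noneAllFalse E s) := by
  have hlower := half_mul_measureReal_noneAllFalse_filter_le E s x hover
  set μ := Measure.pi ν
  have hmono : μ.real (noneAllFalse E s) ≤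
      μ.real (noneAllFalse E {y ∈ s | Disjoint (E y) (E x)}) :=
    measureReal_mono (Set.biInter_subset_biInter_left (Finset.filter_subset _ _))
  have hinsert : noneAllFalse E (insert x s) = noneAllFalse E s \ allFalse (E x) := by
    rw [noneAllFalse, Finset.set_biInter_insert, Set.inter_comm]; rfl
  have hsplit := measureReal_inter_add_sdiff (μ := μ) (s := noneAllFalse E s)
    (t := allFalse (E x)) .of_discrete
  rw [Set.inter_comm] at hsplit
  rw [hinsert]
  linarith [mul_le_mul_of_nonneg_left hmono
    (div_nonneg (measureReal_nonneg (μ := μ) (s := allFalse (E x))) zero_le_two)]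

lemma measureReal_noneAllFalse_le_pow {E : X → Finset ι} {s : Finset X} (hs : s.Nonempty)
    {a η : ℝ} (hη : 0 ≤ η) (ha : ∀ x ∈ s, (Measure.pi ν).real (allFalse (E x)) = a)
    (hover : ∀ y ∈ s, ∑ x ∈ s with ¬Disjoint (E y) (E x),
      (Measure.pi ν).real (allFalse (E y ∪ E x)) ≤ η * s.card)
    (K : ℕ) (hK : K * η ≤ a / 2) :
    (Measure.pi ν).real (noneAllFalse E s) ≤ (1 - a / 2) ^ K := by
  classical
  set μ := Measure.pi ν
  suffices h : ∃ t ⊆ s, t.card ≤ K ∧ μ.real (noneAllFalse E t) ≤ (1 - a / 2) ^ K by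
    obtain ⟨t, hts, -, ht⟩ := h
    exact (measureReal_mono (Set.biInter_subset_biInter_left hts)).trans ht
  have ha1 : a ≤ 1 := by
    obtain ⟨x, hx⟩ := hs
    exact ha x hx ▸ measureReal_le_one
  induction K with
  | zero => exact ⟨∅, s.empty_subset, le_rfl, by simp⟩
  | succ K ih =>
    have hK' : K * η ≤ a / 2 := by push_cast at hK; linarith
    obtain ⟨t, hts, htK, ht⟩ := ih hK'
    obtain ⟨x, hx, hxt⟩ : ∃ x ∈ s, ∑ y ∈ t with ¬Disjoint (E y) (E x),
        μ.real (allFalse (E y ∪ E x)) ≤ K * η := by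
      refine Finset.exists_le_of_sum_le hs ?_
      simp only [Finset.sum_filter]
      rw [Finset.sum_comm]
      simp only [← Finset.sum_filter]
      calc _ ≤ ∑ _y ∈ t, η * s.card := Finset.sum_le_sum fun y hy => hover y (hts hy)
        _ = t.card * (η * s.card) := by simp
        _ ≤ K * (η * s.card) := by gcongr
        _ = ∑ _x ∈ s, K * η := by simp; ring
    refine ⟨insert x t, Finset.insert_subset hx hts, (Finset.card_insert_le _ _).trans (by lia), ?_⟩
    have hstep := measureReal_noneAllFalse_insert_le E t x
      (hxt.trans (hK'.trans_eq (by rw [ha x hx])))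
    rw [ha x hx] at hstep
    rw [pow_succ']
    exact hstep.trans (mul_le_mul_of_nonneg_left ht (by linarith))

lemma measureReal_noneAllFalse_le_exp {E : X → Finset ι} {s : Finset X} (hs : s.Nonempty)
    {a ρ : ℝ} (ha0 : 0 < a) (hρ : 0 < ρ) (ha : ∀ x ∈ s, (Measure.pi ν).real (allFalse (E x)) = a)
    (hover : ∀ y ∈ s, ∑ x ∈ s with ¬Disjoint (E y) (E x),
      (Measure.pi ν).real (allFalse (E y ∪ E x)) ≤ a ^ 2 * ρ * s.card) :
    (Measure.pi ν).real (noneAllFalse E s) ≤ exp (-(1 / (4 * ρ)) + 1 / 2) := by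
  have ha1 : a ≤ 1 := by
    obtain ⟨x, hx⟩ := hs
    exact ha x hx ▸ measureReal_le_one
  have hfloor := Nat.floor_le (a := 1 / (2 * a * ρ)) (by positivity)
  have hfloor' := Nat.sub_one_lt_floor (1 / (2 * a * ρ))
  set K := ⌊1 / (2 * a * ρ)⌋₊
  have hK : K * (a ^ 2 * ρ) ≤ a / 2 := by
    calc K * (a ^ 2 * ρ) ≤ 1 / (2 * a * ρ) * (a ^ 2 * ρ) := by gcongr
      _ = a / 2 := by field_simp
  calc (Measure.pi ν).real (noneAllFalse E s) ≤ (1 - a / 2) ^ K :=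
        measureReal_noneAllFalse_le_pow hs (by positivity) ha hover K hK
    _ ≤ exp (-(a / 2)) ^ K :=
        pow_le_pow_left₀ (by linarith) (by linarith [add_one_le_exp (-(a / 2))]) K
    _ = exp (-(K * (a / 2))) := by rw [← exp_nat_mul, mul_neg]
    _ ≤ exp (-(1 / (4 * ρ)) + 1 / 2) := exp_le_exp.2 <| by
        have h : (1 / (2 * a * ρ) - 1) * (a / 2) = 1 / (4 * ρ) - a / 2 := by field_simp; ring
        nlinarith

end Janson

section RandomGraph

variable {n : ℕ} {p : ℝ}

instance : IsProbabilityMeasure (erMeasure n p) := by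
  unfold erMeasure; infer_instance

lemma graphOf_adj {ω : EdgeType n → Bool} {u v : Fin n} :
    (graphOf ω).Adj u v ↔ ∃ h : ¬ s(u, v).IsDiag, ω ⟨s(u, v), h⟩ = true := by
  simp only [graphOf, SimpleGraph.fromEdgeSet_adj, Set.mem_ofPred_eq, Sym2.mk_isDiag_iff]
  exact ⟨fun h => h.1, fun h => ⟨h, h.1⟩⟩

lemma erMeasure_real_cylinder (hp0 : 0 ≤ p) (hp1 : p ≤ 1) (F : Finset (EdgeType n))
    (x : EdgeType n → Bool) :
    (erMeasure n p).real {ω | ∀ e ∈ F, ω e = x e} = ∏ e ∈ F, bif x e then p else 1 - p := by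
  have hmin : min p.toNNReal 1 = p.toNNReal := min_eq_left (Real.toNNReal_le_one.2 hp1)
  rw [erMeasure, measureReal_pi_cylinder]
  refine Finset.prod_congr rfl fun e _ => ?_
  rw [measureReal_def, PMF.toMeasure_apply_singleton _ _ (measurableSet_singleton _)]
  rw [PMF.bernoulli_apply, hmin]
  cases x e <;> simp [hp0, hp1]

lemma erMeasure_real_allFalse (hp0 : 0 ≤ p) (hp1 : p ≤ 1) (F : Finset (EdgeType n)) :
    (erMeasure n p).real (allFalse F) = (1 - p) ^ F.card :=
  (erMeasure_real_cylinder hp0 hp1 F fun _ => false).trans (by simp)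

lemma pow_le_erMeasure_real_cylinder (hp0 : 0 ≤ p) (hp1 : p ≤ 1) {F : Finset (EdgeType n)} {N : ℕ}
    (hN : F.card ≤ N) (x : EdgeType n → Bool) :
    min p (1 - p) ^ N ≤ (erMeasure n p).real {ω | ∀ e ∈ F, ω e = x e} := by
  have hmin : 0 ≤ min p (1 - p) := le_min hp0 (sub_nonneg.2 hp1)
  calc min p (1 - p) ^ N ≤ min p (1 - p) ^ F.card :=
        pow_le_pow_of_le_one hmin ((min_le_left _ _).trans hp1) hN
    _ = ∏ _e ∈ F, min p (1 - p) := (Finset.prod_const _).symm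
    _ ≤ ∏ e ∈ F, bif x e then p else 1 - p :=
        Finset.prod_le_prod (fun _ _ => hmin) fun e _ => by cases x e <;> simp
    _ = _ := (erMeasure_real_cylinder hp0 hp1 F x).symm

end RandomGraph

section IndependentSets

/-- The potential edges with both endpoints in `I`. -/
def edgesWithin {n : ℕ} (I : Finset (Fin n)) : Finset (EdgeType n) := I.sym2.subtype _

variable {n r : ℕ} {p : ℝ}

lemma edgesWithin_inter (I J : Finset (Fin n)) :
    edgesWithin (I ∩ J) = edgesWithin I ∩ edgesWithin J := by
  ext e
  simp only [edgesWithin, Finset.mem_subtype, Finset.mem_inter, Finset.mem_sym2_iff,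
    ← forall₂_and]

lemma card_edgesWithin (I : Finset (Fin n)) : (edgesWithin I).card = I.card.choose 2 := by
  rw [← Sym2.card_image_offDiag, edgesWithin, Finset.card_subtype]
  congr 1
  ext e
  induction e with | _ a b
  simp only [Finset.mem_filter, Finset.mk_mem_sym2_iff, Sym2.mk_isDiag_iff, Finset.mem_image,
    Finset.mem_offDiag, Prod.exists]
  constructor
  · rintro ⟨⟨ha, hb⟩, hab⟩
    exact ⟨a, b, ⟨ha, hb, hab⟩, rfl⟩
  · rintro ⟨c, d, ⟨hc, hd, hcd⟩, h⟩
    rcases Sym2.eq_iff.1 h with ⟨rfl, rfl⟩ | ⟨rfl, rfl⟩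
    exacts [⟨⟨hc, hd⟩, hcd⟩, ⟨⟨hd, hc⟩, hcd.symm⟩]

lemma not_disjoint_edgesWithin {I J : Finset (Fin n)} :
    ¬Disjoint (edgesWithin I) (edgesWithin J) ↔ 2 ≤ (I ∩ J).card := by
  rw [Finset.disjoint_iff_inter_eq_empty, ← edgesWithin_inter, ← Finset.card_eq_zero,
    card_edgesWithin, Nat.choose_eq_zero_iff, not_lt]

lemma erMeasure_real_allFalse_edgesWithin_union (hp0 : 0 ≤ p) (hp1 : p < 1) {I J : Finset (Fin n)}
    (hI : I.card = r) (hJ : J.card = r) :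
    (erMeasure n p).real (allFalse (edgesWithin I ∪ edgesWithin J)) =
      ((1 - p) ^ r.choose 2) ^ 2 * (1 / (1 - p)) ^ (I ∩ J).card.choose 2 := by
  have hcard := Finset.card_union_add_card_inter (edgesWithin I) (edgesWithin J)
  rw [← edgesWithin_inter] at hcard
  simp only [card_edgesWithin, hI, hJ] at hcard
  rw [erMeasure_real_allFalse hp0 hp1.le, one_div, inv_pow, ← pow_mul, mul_two, ← hcard,
    pow_add, mul_inv_cancel_right₀ (pow_ne_zero _ (sub_pos.2 hp1).ne')]

lemma isIndepSet_graphOf_of_mem_allFalse {ω : EdgeType n → Bool} {I : Finset (Fin n)}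
    (h : ω ∈ allFalse (edgesWithin I)) : (graphOf ω).IsIndepSet I := by
  intro u hu v hv _ hadj
  obtain ⟨huv, ht⟩ := graphOf_adj.1 hadj
  have hf := h ⟨s(u, v), huv⟩ (Finset.mem_subtype.2 (Finset.mk_mem_sym2_iff.2 ⟨hu, hv⟩))
  simp [ht] at hf

lemma choose_sub_sub_le {s i : ℕ} (hrs : r ≤ s) (hi : i ≤ r) :
    ((s - i).choose (r - i) : ℝ) ≤ (r / s : ℝ) ^ i * s.choose r := by
  induction i with
  | zero => simp
  | succ i ih =>
    have hs : (0 : ℝ) < s - i := sub_pos.2 (by exact_mod_cast (by lia : i < s))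
    have hpascal : (s - i : ℝ) * (s - (i + 1)).choose (r - (i + 1)) =
        (s - i).choose (r - i) * (r - i) := by
      have h := Nat.add_one_mul_choose_eq (s - (i + 1)) (r - (i + 1))
      rw [show s - (i + 1) + 1 = s - i by lia, show r - (i + 1) + 1 = r - i by lia] at h
      have h' := congrArg (Nat.cast (R := ℝ)) h
      push_cast [show i ≤ s by lia, show i ≤ r by lia] at h'
      exact h'
    have hratio : ((r : ℝ) - i) / (s - i) ≤ r / s := by
      rw [div_le_div_iff₀ hs (by linarith [(Nat.cast_nonneg i : (0 : ℝ) ≤ i)])]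
      have : (r : ℝ) ≤ s := by exact_mod_cast hrs
      nlinarith [(Nat.cast_nonneg i : (0 : ℝ) ≤ i)]
    calc ((s - (i + 1)).choose (r - (i + 1)) : ℝ)
        = (s - i).choose (r - i) * ((r - i) / (s - i)) := by
          rw [← mul_div_assoc, ← hpascal, mul_div_cancel_left₀ _ hs.ne']
      _ ≤ (r / s : ℝ) ^ i * s.choose r * (r / s) := by
          refine mul_le_mul (ih (by lia)) hratio (div_nonneg ?_ hs.le) (by positivity)
          exact sub_nonneg.2 (by exact_mod_cast (by lia : i ≤ r))
      _ = (r / s : ℝ) ^ (i + 1) * s.choose r := by ring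

/- The square of the left-hand side is `(b * y ^ 2) ^ 2 * (b ^ (i + 1) * y ^ 2) ^ (i - 2)`. -/
lemma pow_choose_two_mul_pow_le {b y : ℝ} (hb : 1 ≤ b) {i : ℕ} (hi : 2 ≤ i)
    (hir : i ≤ r) (h : b ^ (r + 1) * y ^ 2 ≤ 1) : b ^ i.choose 2 * y ^ i ≤ b * y ^ 2 := by
  obtain ⟨j, rfl⟩ := Nat.exists_eq_add_of_le' hi
  have hchoose : (j + 2).choose 2 * 2 = 2 + (j + 2 + 1) * j := by
    rw [Nat.choose_two_right, Nat.div_mul_cancel (Nat.even_mul_pred_self _).two_dvd]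
    rw [show j + 2 - 1 = j + 1 by lia]
    ring
  refine le_of_sq_le_sq ?_ (by positivity)
  calc (b ^ (j + 2).choose 2 * y ^ (j + 2)) ^ 2
      = (b * y ^ 2) ^ 2 * (b ^ (j + 2 + 1) * y ^ 2) ^ j := by
        rw [mul_pow, ← pow_mul, hchoose]; ring
    _ ≤ (b * y ^ 2) ^ 2 * 1 := by
        gcongr
        refine pow_le_one₀ (by positivity) (le_trans ?_ h)
        gcongr
    _ = (b * y ^ 2) ^ 2 := mul_one _

lemma sum_powerset_choose_mul_pow_le {α : Type*} {b : ℝ} (hb : 1 ≤ b) {I : Finset α}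
    (hI : I.card = r) {s : ℕ} (hrs : r ≤ s) (h : b ^ (r + 1) * ((r : ℝ) ^ 2 / s) ^ 2 ≤ 1) :
    ∑ A ∈ I.powerset with 2 ≤ A.card, b ^ A.card.choose 2 * (s - A.card).choose (r - A.card) ≤
      (r + 1) * (b * ((r : ℝ) ^ 2 / s) ^ 2) * s.choose r := by
  rw [Finset.sum_filter, Finset.sum_powerset_apply_card (fun i =>
    if 2 ≤ i then b ^ i.choose 2 * ((s - i).choose (r - i) : ℝ) else 0), hI]
  calc _ ≤ ∑ _i ∈ Finset.range (r + 1), b * ((r : ℝ) ^ 2 / s) ^ 2 * s.choose r := by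
        refine Finset.sum_le_sum fun i hi => ?_
        have hir : i ≤ r := Finset.mem_range_succ_iff.1 hi
        rw [nsmul_eq_mul]
        split_ifs with h2
        · calc (r.choose i : ℝ) * (b ^ i.choose 2 * (s - i).choose (r - i))
              ≤ r ^ i * (b ^ i.choose 2 * ((r / s : ℝ) ^ i * s.choose r)) := by
                gcongr
                · exact_mod_cast Nat.choose_le_pow r i
                · exact choose_sub_sub_le hrs hir
            _ = b ^ i.choose 2 * ((r : ℝ) ^ 2 / s) ^ i * s.choose r := by
                rw [sq, mul_div_assoc, mul_pow]; ring
            _ ≤ b * ((r : ℝ) ^ 2 / s) ^ 2 * s.choose r := by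
                exact mul_le_mul_of_nonneg_right
                  (pow_choose_two_mul_pow_le hb h2 hir h) (Nat.cast_nonneg _)
        · rw [mul_zero]
          positivity
    _ = _ := by
        rw [Finset.sum_const, Finset.card_range, nsmul_eq_mul]
        push_cast
        ring

lemma sum_pow_card_inter_le {α : Type*} [DecidableEq α] {b : ℝ} (hb : 1 ≤ b) {S I : Finset α}
    (hI : I ∈ S.powersetCard r) (h : b ^ (r + 1) * ((r : ℝ) ^ 2 / S.card) ^ 2 ≤ 1) :
    ∑ J ∈ S.powersetCard r with 2 ≤ (I ∩ J).card, b ^ (I ∩ J).card.choose 2 ≤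
      (r + 1) * (b * ((r : ℝ) ^ 2 / S.card) ^ 2) * (S.powersetCard r).card := by
  obtain ⟨hIS, hIr⟩ := Finset.mem_powersetCard.1 hI
  have hrs : r ≤ S.card := hIr ▸ Finset.card_le_card hIS
  calc ∑ J ∈ S.powersetCard r with 2 ≤ (I ∩ J).card, b ^ (I ∩ J).card.choose 2
      ≤ ∑ J ∈ S.powersetCard r, ∑ A ∈ I.powerset with 2 ≤ A.card,
          if A ⊆ J then b ^ A.card.choose 2 else 0 := by
        rw [Finset.sum_filter]
        refine Finset.sum_le_sum fun J _ => ?_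
        have hnonneg : ∀ A ∈ I.powerset.filter (2 ≤ Finset.card ·),
            0 ≤ if A ⊆ J then b ^ A.card.choose 2 else 0 := fun A _ => by split_ifs <;> positivity
        split_ifs with h2
        · have hsingle := Finset.single_le_sum hnonneg (a := I ∩ J) (by simpa using h2)
          rwa [if_pos Finset.inter_subset_right] at hsingle
        · exact Finset.sum_nonneg hnonneg
    _ = ∑ A ∈ I.powerset with 2 ≤ A.card,
          b ^ A.card.choose 2 * (S.card - A.card).choose (r - A.card) := by
        rw [Finset.sum_comm]
        refine Finset.sum_congr rfl fun A hA => ?_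
        have hAI := Finset.mem_powerset.1 (Finset.mem_filter.1 hA).1
        rw [← Finset.sum_filter, Finset.sum_const, nsmul_eq_mul, mul_comm,
          Finset.card_filter_powersetCard_subset _ _ _ (hAI.trans hIS)
            (hIr ▸ Finset.card_le_card hAI)]
    _ ≤ _ := by
        rw [Finset.card_powersetCard]
        exact sum_powerset_choose_mul_pow_le hb hIr hrs h

lemma erMeasure_real_forall_not_isNIndepSet_le (hp0 : 0 ≤ p) (hp1 : p < 1) {S : Finset (Fin n)}
    (hrS : r ≤ S.card) {ρ : ℝ} (hρ : 0 < ρ)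
    (h : (1 / (1 - p)) ^ (r + 1) * ((r : ℝ) ^ 2 / S.card) ^ 2 ≤ 1)
    (hr : (r + 1) * (1 / (1 - p) * ((r : ℝ) ^ 2 / S.card) ^ 2) ≤ ρ) :
    (erMeasure n p).real {ω | ∀ I ⊆ S, ¬(graphOf ω).IsNIndepSet r I} ≤
      exp (-(1 / (4 * ρ)) + 1 / 2) := by
  have hq : 0 < 1 - p := sub_pos.2 hp1
  have hb : 1 ≤ 1 / (1 - p) := one_le_one_div hq (sub_le_self _ hp0)
  have hsub : {ω | ∀ I ⊆ S, ¬(graphOf ω).IsNIndepSet r I} ⊆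
      noneAllFalse edgesWithin (S.powersetCard r) := fun ω hω =>
    Set.mem_iInter₂.2 fun I hI hfalse =>
      hω I (Finset.mem_powersetCard.1 hI).1
        ⟨isIndepSet_graphOf_of_mem_allFalse hfalse, (Finset.mem_powersetCard.1 hI).2⟩
  refine (measureReal_mono hsub).trans (measureReal_noneAllFalse_le_exp
    (Finset.powersetCard_nonempty.2 hrS) (pow_pos hq (r.choose 2)) hρ (fun I hI => ?_)
    fun I hI => ?_)
  · rw [← erMeasure, erMeasure_real_allFalse hp0 hp1.le, card_edgesWithin,
      (Finset.mem_powersetCard.1 hI).2]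
  · simp only [not_disjoint_edgesWithin]
    calc _ = ((1 - p) ^ r.choose 2) ^ 2 * ∑ J ∈ S.powersetCard r with 2 ≤ (I ∩ J).card,
          (1 / (1 - p)) ^ (I ∩ J).card.choose 2 := by
          rw [Finset.mul_sum]
          exact Finset.sum_congr rfl fun J hJ => erMeasure_real_allFalse_edgesWithin_union hp0 hp1
            (Finset.mem_powersetCard.1 hI).2
            (Finset.mem_powersetCard.1 (Finset.mem_filter.1 hJ).1).2
      _ ≤ ((1 - p) ^ r.choose 2) ^ 2 * (ρ * (S.powersetCard r).card) := by
          gcongr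
          exact (sum_pow_card_inter_le hb hI h).trans (by gcongr)
      _ = _ := (mul_assoc _ _ _).symm

end IndependentSets

section StarAssignments

variable {V : Type*} {Γ : SimpleGraph V}

/-- The data of induced stars with centres in `D` whose leaf sets partition `U`, encoded as the map
`σ` sending a leaf to the centre of its star. -/
structure IsStarAssignment (Γ : SimpleGraph V) (U D : Finset V) (σ : V → V) : Prop where
  mem : ∀ u ∈ U, σ u ∈ D
  adj : ∀ u ∈ U, Γ.Adj (σ u) u
  not_adj : ∀ x ∈ U, ∀ y ∈ U, σ x = σ y → ¬Γ.Adj x y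

lemma isStarAssignment_empty (D : Finset V) (σ : V → V) : IsStarAssignment Γ ∅ D σ := by
  constructor <;> simp

lemma isStarAssignment_const {I : Finset V} {c : V} (hI : Γ.IsIndepSet I)
    (hc : ∀ x ∈ I, Γ.Adj c x) : IsStarAssignment Γ I {c} fun _ => c where
  mem := by simp
  adj := hc
  not_adj x hx y hy _ hxy := hI hx hy hxy.ne hxy

lemma isStarAssignment_of_injOn {U D : Finset V} {σ : V → V} (hσ : Set.InjOn σ U)
    (hmem : ∀ u ∈ U, σ u ∈ D) (hadj : ∀ u ∈ U, Γ.Adj (σ u) u) : IsStarAssignment Γ U D σ where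
  mem := hmem
  adj := hadj
  not_adj _ hx _ hy hxy := hσ hx hy hxy ▸ Γ.irrefl

namespace IsStarAssignment

variable {U U' D D' : Finset V} {σ σ' : V → V}

variable [DecidableEq V]

lemma union (hσ : IsStarAssignment Γ U D σ) (hσ' : IsStarAssignment Γ U' D' σ')
    (hD : Disjoint D D') : IsStarAssignment Γ (U ∪ U') (D ∪ D') (U.piecewise σ σ') := by
  have hcases : ∀ x ∈ U ∪ U', (x ∈ U ∧ U.piecewise σ σ' x = σ x) ∨
      (x ∈ U' ∧ U.piecewise σ σ' x = σ' x) := fun x hx => by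
    by_cases hxU : x ∈ U
    · exact .inl ⟨hxU, Finset.piecewise_eq_of_mem _ _ _ hxU⟩
    · exact .inr ⟨(Finset.mem_union.1 hx).resolve_left hxU,
        Finset.piecewise_eq_of_notMem _ _ _ hxU⟩
  refine ⟨fun u hu => ?_, fun u hu => ?_, fun x hx y hy hxy => ?_⟩
  · rcases hcases u hu with ⟨hu, h⟩ | ⟨hu, h⟩ <;> rw [h]
    exacts [Finset.mem_union_left _ (hσ.mem u hu), Finset.mem_union_right _ (hσ'.mem u hu)]
  · rcases hcases u hu with ⟨hu, h⟩ | ⟨hu, h⟩ <;> rw [h]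
    exacts [hσ.adj u hu, hσ'.adj u hu]
  · rcases hcases x hx with ⟨hx, h⟩ | ⟨hx, h⟩ <;> rcases hcases y hy with ⟨hy, h'⟩ | ⟨hy, h'⟩ <;>
      rw [h, h'] at hxy
    · exact hσ.not_adj x hx y hy hxy
    · exact (Finset.disjoint_left.1 hD (hσ.mem x hx) (hxy ▸ hσ'.mem y hy)).elim
    · exact (Finset.disjoint_left.1 hD (hσ.mem y hy) (hxy ▸ hσ'.mem x hx)).elim
    · exact hσ'.not_adj x hx y hy hxy

lemma exists_isStarFactor {n : ℕ} {Γ : SimpleGraph (Fin n)} {v : Fin n} {D : Finset (Fin n)}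
    {σ : Fin n → Fin n} (hσ : IsStarAssignment Γ ({v}ᶜ \ D) D σ) (hD : ∀ c ∈ D, Γ.Adj v c) :
    ∃ c L, IsStarFactor Γ v D.card c L ∧ Set.range c = D := by
  set U : Finset (Fin n) := {v}ᶜ \ D
  have hU : ∀ u ∈ U, u ≠ v ∧ u ∉ D := fun u hu => by simpa [U] using hu
  let c : Fin D.card → Fin n := fun i => D.equivFin.symm i
  have hc : Function.Injective c := Subtype.val_injective.comp D.equivFin.symm.injective
  have hrange : Set.range c = D :=
    (D.equivFin.symm.surjective.range_comp _).trans Subtype.range_coe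
  have hcD : ∀ i, c i ∈ D := fun i => (D.equivFin.symm i).2
  refine ⟨c, fun i => {u | u ∈ U ∧ σ u = c i}, ⟨fun i => hD _ (hcD i),
    fun i hi => (hU _ hi.1).2 (hcD i), fun i x hx => hx.2 ▸ hσ.adj x hx.1,
    fun i x hx y hy _ => hσ.not_adj x hx.1 y hy.1 (hx.2.trans hy.2.symm), ?_, ?_⟩, hrange⟩
  · intro i _ j _ hij
    refine Set.disjoint_left.2 ?_
    rintro x (rfl | ⟨hx, hxi⟩) (hxj | ⟨hx', hxj⟩)
    · exact hij (hc hxj)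
    · exact (hU _ hx').2 (hcD i)
    · exact (hU _ hx).2 (hxj ▸ hcD j)
    · exact hij (hc (hxi.symm.trans hxj))
  · ext u
    simp only [Set.mem_iUnion, Set.mem_insert_iff, Set.mem_ofPred_eq, Set.mem_compl_singleton_iff]
    constructor
    · rintro ⟨i, rfl | hu⟩
      exacts [(hD _ (hcD i)).ne', (hU u hu.1).1]
    · intro huv
      by_cases huD : u ∈ D
      · obtain ⟨i, hi⟩ : u ∈ Set.range c := hrange ▸ huD
        exact ⟨i, .inl hi.symm⟩
      · have huU : u ∈ U := by simp [U, huv, huD]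
        obtain ⟨i, hi⟩ : σ u ∈ Set.range c := hrange ▸ hσ.mem u huU
        exact ⟨i, .inr ⟨huU, hi.symm⟩⟩

end IsStarAssignment

open scoped Classical in
/-- The two pseudorandomness properties behind the greedy packing of stars: sets of size `s₀`
contain independent `r`-sets, and among any `d` potential centres one has at least `s₀` neighbours
in a given set of size `s₁`. -/
structure IsStarRich (Γ : SimpleGraph V) (r s₀ s₁ d : ℕ) : Prop where
  exists_isNIndepSet : ∀ S : Finset V, s₀ ≤ S.card → ∃ I ⊆ S, Γ.IsNIndepSet r I
  exists_le_card_filter_adj : ∀ S D : Finset V, Disjoint S D → s₁ ≤ S.card → d ≤ D.card →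
    ∃ c ∈ D, s₀ ≤ (S.filter (Γ.Adj c)).card

lemma IsStarRich.exists_isStarAssignment [DecidableEq V] {r s₀ s₁ d : ℕ}
    (hΓ : IsStarRich Γ r s₀ s₁ d) {j : ℕ} {U D : Finset V} (hUD : Disjoint U D)
    (hD : d + j ≤ D.card) (hU : U.card ≤ s₁ + j * r) :
    ∃ R ⊆ U, R.card ≤ s₁ ∧ ∃ σ, IsStarAssignment Γ (U \ R) D σ := by
  classical
  induction j generalizing U D with
  | zero => exact ⟨U, subset_rfl, by simpa using hU, id, by simp [isStarAssignment_empty]⟩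
  | succ j ih =>
    rcases le_total U.card s₁ with hsmall | hlarge
    · exact ⟨U, subset_rfl, hsmall, id, by simp [isStarAssignment_empty]⟩
    obtain ⟨c, hcD, hc⟩ := hΓ.exists_le_card_filter_adj U D hUD hlarge (by lia)
    obtain ⟨I, hIc, hI⟩ := hΓ.exists_isNIndepSet _ hc
    have hIU : I ⊆ U := hIc.trans (Finset.filter_subset _ _)
    have hcardI := Finset.card_sdiff_of_subset hIU
    obtain ⟨R, hRU, hR, σ, hσ⟩ := ih (U := U \ I) (D := D.erase c)
      (hUD.mono Finset.sdiff_subset (Finset.erase_subset _ _))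
      (by rw [Finset.card_erase_of_mem hcD]; lia) (by rw [hcardI, hI.card_eq]; lia)
    have hstar := isStarAssignment_const hI.isIndepSet
      fun x hx => (Finset.mem_filter.1 (hIc hx)).2
    refine ⟨R, hRU.trans Finset.sdiff_subset, hR, I.piecewise (fun _ => c) σ, ?_⟩
    convert hstar.union hσ (by simp) using 1
    · ext x
      have := @hRU x
      have := @hIU x
      simp only [Finset.mem_sdiff, Finset.mem_union] at *
      tauto
    · rw [Finset.singleton_union, Finset.insert_erase hcD]

end StarAssignments

section JoinedCopies

variable {V W α : Type*} {Γ : SimpleGraph V} {F : SimpleGraph W}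

/-- The set `C` carries an induced `F`-factor in `Γ`; for `F = C_k` this unfolds to
`HasInducedCycleFactorOn`. -/
def HasInducedFactorOn (Γ : SimpleGraph V) (F : SimpleGraph W) (C : Set V) : Prop :=
  ∃ (t : ℕ) (g : Fin t → W → V),
    (∀ i, Function.Injective (g i)) ∧
    (Set.univ : Set (Fin t)).PairwiseDisjoint (fun i => Set.range (g i)) ∧
    (⋃ i, Set.range (g i)) = C ∧
    ∀ i a b, Γ.Adj (g i a) (g i b) ↔ F.Adj a b

/-- The map `τ` embeds `F` as an induced subgraph of `Γ`, all of whose vertices are adjacent to all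
vertices of `S`. -/
def IsJoinedCopy (Γ : SimpleGraph V) (F : SimpleGraph W) (S : Finset V) (τ : W → V) : Prop :=
  Γ.comap τ = F ∧ ∀ x ∈ S, ∀ a, Γ.Adj x (τ a)

open scoped Classical in
/-- The indices in `J` of those members of a family `T` of disjoint tuples that are copies of `F`
joined to `S`. -/
noncomputable def joinedCopies (Γ : SimpleGraph V) (F : SimpleGraph W) (T : α × W ↪ V)
    (J : Finset α) (S : Finset V) : Finset α :=
  {i ∈ J | IsJoinedCopy Γ F S fun a => T (i, a)}

lemma mem_joinedCopies {T : α × W ↪ V} {J : Finset α} {S : Finset V} {i : α} :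
    i ∈ joinedCopies Γ F T J S ↔ i ∈ J ∧ IsJoinedCopy Γ F S fun a => T (i, a) := by
  simp [joinedCopies]

lemma joinedCopies_subset {T : α × W ↪ V} {J : Finset α} {S : Finset V} :
    joinedCopies Γ F T J S ⊆ J := fun _ hi => (mem_joinedCopies.1 hi).1

variable [Fintype W]

/-- The vertices of the tuples of `T` indexed by `K`. -/
def tupleVertices (T : α × W ↪ V) (K : Finset α) : Finset V := (K ×ˢ Finset.univ).map T

lemma card_tupleVertices (T : α × W ↪ V) (K : Finset α) :
    (tupleVertices T K).card = K.card * Fintype.card W := by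
  simp [tupleVertices]

lemma mem_tupleVertices {T : α × W ↪ V} {K : Finset α} {x : V} :
    x ∈ tupleVertices T K ↔ ∃ i ∈ K, ∃ a, T (i, a) = x := by
  simp [tupleVertices]

lemma tupleVertices_union [DecidableEq V] [DecidableEq α] (T : α × W ↪ V) (K K' : Finset α) :
    tupleVertices T (K ∪ K') = tupleVertices T K ∪ tupleVertices T K' := by
  ext x
  simp [mem_tupleVertices, or_and_right, exists_or]

lemma disjoint_tupleVertices {T : α × W ↪ V} {K K' : Finset α} (h : Disjoint K K') :
    Disjoint (tupleVertices T K) (tupleVertices T K') := by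
  rw [tupleVertices, tupleVertices, Finset.disjoint_map, Finset.disjoint_product]
  exact .inl h

lemma hasInducedFactorOn_tupleVertices {T : α × W ↪ V} {K : Finset α}
    (hK : ∀ i ∈ K, Γ.comap (fun a => T (i, a)) = F) :
    HasInducedFactorOn Γ F (tupleVertices T K : Set V) := by
  refine ⟨K.card, fun j a => T (K.equivFin.symm j, a), fun j a b h => ?_, fun i _ j _ hij => ?_,
    ?_, fun j a b => ?_⟩
  · exact (Prod.ext_iff.1 (T.injective h)).2
  · refine Set.disjoint_left.2 ?_
    rintro _ ⟨a, rfl⟩ ⟨b, hb⟩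
    exact hij (K.equivFin.symm.injective (Subtype.ext (Prod.ext_iff.1 (T.injective hb)).1.symm))
  · ext x
    simp only [Set.mem_iUnion, Set.mem_range, Finset.mem_coe, mem_tupleVertices]
    constructor
    · rintro ⟨j, a, rfl⟩
      exact ⟨_, (K.equivFin.symm j).2, a, rfl⟩
    · rintro ⟨i, hi, a, rfl⟩
      exact ⟨K.equivFin ⟨i, hi⟩, a, by simp⟩
  · exact iff_of_eq (congrFun₂ (congrArg SimpleGraph.Adj (hK _ (K.equivFin.symm j).2)) a b)

variable [DecidableEq V] [Nonempty W]

/- Hall's condition holds trivially: every vertex of `R` has at least `R.card` choices. -/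
lemma exists_isStarAssignment_joinedCopies {T : α × W ↪ V} {J : Finset α} {v : V} {R : Finset V}
    (hR : ∀ u ∈ R, R.card ≤ (joinedCopies Γ F T J {v, u}).card) :
    ∃ σ, IsStarAssignment Γ R (tupleVertices T (joinedCopies Γ F T J {v})) σ := by
  classical
  obtain ⟨f, hf, hfR⟩ := (Finset.all_card_le_biUnion_card_iff_exists_injective
    fun u : R => joinedCopies Γ F T J {v, u.1}).1 fun s => by
      rcases s.eq_empty_or_nonempty with rfl | ⟨u, hu⟩
      · simp
      · calc s.card ≤ R.card := by simpa using s.card_le_univ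
          _ ≤ (joinedCopies Γ F T J {v, u.1}).card := hR u u.2
          _ ≤ _ := Finset.card_le_card
            (Finset.subset_biUnion_of_mem (fun u : R => joinedCopies Γ F T J {v, u.1}) hu)
  let a₀ : W := Classical.arbitrary W
  let σ : V → V := fun u => if hu : u ∈ R then T (f ⟨u, hu⟩, a₀) else u
  have hσ : ∀ u (hu : u ∈ R), σ u = T (f ⟨u, hu⟩, a₀) := fun u hu => dif_pos hu
  refine ⟨σ, isStarAssignment_of_injOn (fun x hx y hy hxy => ?_) (fun u hu => ?_) fun u hu => ?_⟩
  · rw [hσ x hx, hσ y hy] at hxy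
    exact congrArg Subtype.val (hf (Prod.ext_iff.1 (T.injective hxy)).1)
  · obtain ⟨hJ, hF, hadj⟩ := mem_joinedCopies.1 (hfR ⟨u, hu⟩)
    rw [hσ u hu, mem_tupleVertices]
    exact ⟨_, mem_joinedCopies.2 ⟨hJ, hF, fun x hx => hadj x (by simp_all)⟩, a₀, rfl⟩
  · rw [hσ u hu]
    exact ((mem_joinedCopies.1 (hfR ⟨u, hu⟩)).2.2 u (by simp) a₀).symm

end JoinedCopies

section Deterministic

variable {n : ℕ} {W α : Type*} {Γ : SimpleGraph (Fin n)} {F : SimpleGraph W} {v : Fin n}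

/-- There is a `v`-factor with `ℓ` stars whose centres carry an induced `F`-factor. -/
def HasFactorWithInducedCenters (Γ : SimpleGraph (Fin n)) (F : SimpleGraph W) (v : Fin n)
    (ℓ : ℕ) : Prop :=
  ∃ (c : Fin ℓ → Fin n) (L : Fin ℓ → Set (Fin n)),
    IsStarFactor Γ v ℓ c L ∧ HasInducedFactorOn Γ F (Set.range c)

lemma IsStarAssignment.hasFactorWithInducedCenters [Fintype W] {T : α × W ↪ Fin n} {K : Finset α}
    {σ : Fin n → Fin n}
    (hσ : IsStarAssignment Γ ({v}ᶜ \ tupleVertices T K) (tupleVertices T K) σ)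
    (hK : ∀ i ∈ K, IsJoinedCopy Γ F {v} fun a => T (i, a)) :
    HasFactorWithInducedCenters Γ F v (K.card * Fintype.card W) := by
  have hadj : ∀ x ∈ tupleVertices T K, Γ.Adj v x := fun x hx => by
    obtain ⟨i, hi, a, rfl⟩ := mem_tupleVertices.1 hx
    exact (hK i hi).2 v (Finset.mem_singleton_self v) a
  obtain ⟨c, L, hcL, hc⟩ := hσ.exists_isStarFactor hadj
  rw [← card_tupleVertices T]
  exact ⟨c, L, hcL, hc ▸ hasInducedFactorOn_tupleVertices fun i hi => (hK i hi).1⟩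

theorem IsStarRich.hasFactorWithInducedCenters [Fintype W] [Nonempty W]
    {r s₀ s₁ d j t : ℕ} (hΓ : IsStarRich Γ r s₀ s₁ d) {T : α × W ↪ Fin n} {J J' : Finset α}
    (hJJ' : Disjoint J J') (hJt : J.card ≤ t)
    (hJ : ∀ u ≠ v, s₁ ≤ (joinedCopies Γ F T J {v, u}).card)
    (hJ' : t ≤ (joinedCopies Γ F T J' {v}).card)
    (ht : J.card * Fintype.card W + (d + j) ≤ t * Fintype.card W) (hj : n ≤ j * r) :
    HasFactorWithInducedCenters Γ F v (t * Fintype.card W) := by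
  classical
  set K := joinedCopies Γ F T J {v}
  have hKJ : K.card ≤ J.card := Finset.card_le_card joinedCopies_subset
  obtain ⟨K', hK', hK'card⟩ := Finset.exists_subset_card_eq ((t.sub_le K.card).trans hJ')
  have hKK' : Disjoint K K' := hJJ'.mono joinedCopies_subset (hK'.trans joinedCopies_subset)
  have hcopy : ∀ i ∈ K ∪ K', IsJoinedCopy Γ F {v} fun a => T (i, a) := fun i hi =>
    (Finset.mem_union.1 hi).elim (fun h => (mem_joinedCopies.1 h).2)
      fun h => (mem_joinedCopies.1 (hK' h)).2
  have hcard : (K ∪ K').card = t := by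
    rw [Finset.card_union_of_disjoint hKK', hK'card, Nat.add_sub_cancel' (hKJ.trans hJt)]
  obtain ⟨R, hRU, hRcard, σ, hσ⟩ := hΓ.exists_isStarAssignment
    (U := {v}ᶜ \ (tupleVertices T K ∪ tupleVertices T K')) (D := tupleVertices T K') (j := j)
    (Finset.sdiff_disjoint.mono_right Finset.subset_union_right)
    (by
      rw [card_tupleVertices, hK'card, Nat.sub_mul]
      have := Nat.mul_le_mul_right (Fintype.card W) hKJ
      lia)
    ((Finset.card_le_univ _).trans (by simpa using hj.trans (Nat.le_add_left _ _)))
  obtain ⟨σ', hσ'⟩ : ∃ σ', IsStarAssignment Γ R (tupleVertices T K) σ' :=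
    exists_isStarAssignment_joinedCopies fun u hu => hRcard.trans
      (hJ u (by simpa using (Finset.mem_sdiff.1 (hRU hu)).1))
  have hunion := hσ'.union hσ (disjoint_tupleVertices hKK')
  rw [Finset.union_sdiff_of_subset hRU, ← tupleVertices_union] at hunion
  exact hcard ▸ hunion.hasFactorWithInducedCenters hcopy

end Deterministic

section FailureProbabilities

lemma measureReal_setOf_exists_le {Ω κ : Type*} [MeasurableSpace Ω] {μ : Measure Ω}
    [IsFiniteMeasure μ] [Fintype κ] {P : κ → Prop} {A : κ → Set Ω} {c : ℝ} (hc : 0 ≤ c)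
    (hA : ∀ x, P x → μ.real (A x) ≤ c) :
    μ.real {ω | ∃ x, P x ∧ ω ∈ A x} ≤ Fintype.card κ * c := by
  classical
  calc μ.real {ω | ∃ x, P x ∧ ω ∈ A x} ≤ μ.real (⋃ x ∈ Finset.univ.filter P, A x) :=
        measureReal_mono (fun ω ⟨x, hx, hω⟩ => Set.mem_biUnion (by simpa using hx) hω)
          (measure_ne_top _ _)
    _ ≤ ∑ x with P x, μ.real (A x) := measureReal_biUnion_finset_le _ _
    _ ≤ (Finset.univ.filter P).card • c :=
        Finset.sum_le_card_nsmul _ _ _ fun x hx => hA x (Finset.mem_filter.1 hx).2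
    _ ≤ Fintype.card κ * c := by
        rw [nsmul_eq_mul]
        gcongr
        exact Finset.card_le_univ _

variable {n : ℕ} {p : ℝ}

lemma graphOf_adj_congr {ω ω' : EdgeType n → Bool} {u v : Fin n}
    (h : ∀ huv : ¬s(u, v).IsDiag, ω ⟨s(u, v), huv⟩ = ω' ⟨s(u, v), huv⟩) :
    (graphOf ω).Adj u v ↔ (graphOf ω').Adj u v := by
  rw [graphOf_adj, graphOf_adj]
  exact exists_congr fun huv => by rw [h huv]

lemma graphOf_surjective : Function.Surjective (graphOf (n := n)) := fun Γ => by
  classical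
  refine ⟨fun e => decide (e.1 ∈ Γ.edgeSet), ?_⟩
  ext u v
  simpa [graphOf_adj] using SimpleGraph.Adj.ne

lemma dependsOn_graphOf_adj (u v : Fin n) :
    DependsOn (· ∈ {ω | (graphOf ω).Adj u v}) {e : EdgeType n | e.1 = s(u, v)} :=
  fun _ _ h => propext (graphOf_adj_congr fun huv => h ⟨s(u, v), huv⟩ rfl)

lemma erMeasure_real_adj (hp0 : 0 ≤ p) (hp1 : p ≤ 1) {u v : Fin n} (huv : u ≠ v) :
    (erMeasure n p).real {ω | (graphOf ω).Adj u v} = p := by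
  convert erMeasure_real_cylinder hp0 hp1 {⟨s(u, v), huv⟩} fun _ => true using 2
  · ext ω
    simp [graphOf_adj, huv]
  · simp

open scoped Classical in
lemma erMeasure_real_forall_card_adj_lt_le (hp0 : 0 ≤ p) (hp1 : p ≤ 1) {S D : Finset (Fin n)}
    (hSD : Disjoint S D) {s₀ : ℕ} (hs₀ : s₀ ≤ p / 2 * S.card) :
    (erMeasure n p).real {ω | ∀ c ∈ D, (S.filter ((graphOf ω).Adj c)).card < s₀} ≤
      exp (-(p ^ 2 / 2 * (S.card * D.card))) := by
  have hpairs : ((D ×ˢ S : Finset (Fin n × Fin n)) : Set (Fin n × Fin n)).PairwiseDisjoint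
      fun a => {e : EdgeType n | e.1 = s(a.1, a.2)} := by
    rintro ⟨c, x⟩ hcx ⟨c', x'⟩ hcx' hne
    simp only [Finset.coe_product, Set.mem_prod, Finset.mem_coe] at hcx hcx'
    refine Set.disjoint_left.2 fun e he he' => ?_
    rcases Sym2.eq_iff.1 (he.symm.trans he') with ⟨rfl, rfl⟩ | ⟨rfl, rfl⟩
    · exact hne rfl
    · exact Finset.disjoint_left.1 hSD hcx'.2 hcx.1
  have hcount := measureReal_pi_card_filter_le (s := D ×ˢ S)
    (A := fun a => {ω | (graphOf ω).Adj a.1 a.2}) (fun a _ => dependsOn_graphOf_adj a.1 a.2)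
    hpairs hp0 fun a ha => (erMeasure_real_adj hp0 hp1 fun (h : a.1 = a.2) =>
      Finset.disjoint_left.1 hSD (Finset.mem_product.1 ha).2
        (h ▸ (Finset.mem_product.1 ha).1)).ge
  rw [Finset.card_product, mul_comm D.card] at hcount
  refine (measureReal_mono fun ω hω => ?_).trans (hcount.trans_eq (by push_cast; rfl))
  calc _ = ((∑ c ∈ D, (S.filter ((graphOf ω).Adj c)).card : ℕ) : ℝ) := by
        rw [Finset.card_filter, Finset.sum_product]
        simp only [Finset.card_filter, Set.mem_ofPred_eq]
    _ ≤ D.card * s₀ := by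
        exact_mod_cast Finset.sum_le_card_nsmul D _ s₀ fun c hc => (hω c hc).le
    _ ≤ D.card * (p / 2 * S.card) := by gcongr
    _ = p / 2 * (S.card * D.card : ℕ) := by push_cast; ring

lemma erMeasure_real_not_isStarRich_le (hp0 : 0 ≤ p) (hp1 : p < 1) {r s₀ s₁ d : ℕ} {ρ : ℝ}
    (hs₀ : 0 < s₀) (hr : r ≤ s₀) (hρ : 0 < ρ)
    (hpow : (1 / (1 - p)) ^ (r + 1) * ((r : ℝ) ^ 2 / s₀) ^ 2 ≤ 1)
    (hrρ : (r + 1) * (1 / (1 - p) * ((r : ℝ) ^ 2 / s₀) ^ 2) ≤ ρ) (hs₁ : s₀ ≤ p / 2 * s₁) :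
    (erMeasure n p).real {ω | ¬IsStarRich (graphOf ω) r s₀ s₁ d} ≤
      2 ^ n * exp (-(1 / (4 * ρ)) + 1 / 2) + 4 ^ n * exp (-(p ^ 2 / 2 * (s₁ * d))) := by
  classical
  have : 0 < 1 / (1 - p) := one_div_pos.2 (sub_pos.2 hp1)
  have hindep := measureReal_setOf_exists_le (μ := erMeasure n p)
    (P := fun S : Finset (Fin n) => s₀ ≤ S.card)
    (A := fun S => {ω | ∀ I ⊆ S, ¬(graphOf ω).IsNIndepSet r I}) (exp_pos _).le fun S hS => by
      have hratio : (r : ℝ) ^ 2 / S.card ≤ (r : ℝ) ^ 2 / s₀ := by gcongr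
      refine erMeasure_real_forall_not_isNIndepSet_le hp0 hp1 (hr.trans hS) hρ
        (le_trans ?_ hpow) (le_trans ?_ hrρ) <;> gcongr
  have hnbrs := measureReal_setOf_exists_le (μ := erMeasure n p)
    (P := fun SD : Finset (Fin n) × Finset (Fin n) =>
      Disjoint SD.1 SD.2 ∧ s₁ ≤ SD.1.card ∧ d ≤ SD.2.card)
    (A := fun SD => {ω | ∀ c ∈ SD.2, (SD.1.filter ((graphOf ω).Adj c)).card < s₀})
    (exp_pos (-(p ^ 2 / 2 * (s₁ * d)))).le fun SD hSD =>
      (erMeasure_real_forall_card_adj_lt_le hp0 hp1.le hSD.1 (hs₁.trans (by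
        have := hSD.2.1
        gcongr))).trans (exp_le_exp.2 (neg_le_neg (by
          have h1 := hSD.2.1
          have h2 := hSD.2.2
          gcongr)))
  rw [Fintype.card_finset, Fintype.card_fin] at hindep
  rw [Fintype.card_prod, Fintype.card_finset, Fintype.card_fin, ← mul_pow] at hnbrs
  push_cast at hindep hnbrs
  refine (measureReal_mono fun ω hω => ?_).trans
    ((measureReal_union_le _ _).trans (add_le_add hindep hnbrs))
  by_contra hgood
  simp only [Set.mem_union, Set.mem_ofPred_eq, not_or, not_exists, not_and, not_forall,
    not_not, not_lt] at hgood
  exact hω ⟨fun S hS => by simpa using hgood.1 S hS,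
    fun S D hSD hS hD => by simpa using hgood.2 (S, D) ⟨hSD, hS, hD⟩⟩

variable {W α : Type*} {F : SimpleGraph W}

lemma pow_le_erMeasure_real_of_dependsOn (hp0 : 0 ≤ p) (hp1 : p ≤ 1)
    {A : Set (EdgeType n → Bool)} {E : Finset (EdgeType n)} {N : ℕ}
    (hA : DependsOn (· ∈ A) (E : Set (EdgeType n))) (hne : A.Nonempty) (hE : E.card ≤ N) :
    min p (1 - p) ^ N ≤ (erMeasure n p).real A := by
  obtain ⟨x, hx⟩ := hne
  exact (pow_le_erMeasure_real_cylinder hp0 hp1 hE x).trans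
    (measureReal_mono fun ω hω => (iff_of_eq (hA fun e he => hω e he)).2 hx)

lemma exists_isJoinedCopy {V : Type*} {S : Finset V} (τ : W ↪ V)
    (hS : ∀ a, τ a ∉ S) : ∃ Γ, IsJoinedCopy Γ F S τ := by
  refine ⟨F.map τ ⊔ SimpleGraph.fromRel fun x y => x ∈ S ∧ y ∈ Set.range τ, ?_,
    fun x hx a => ?_⟩
  · ext a b
    simp [hS]
  · refine .inr ((SimpleGraph.fromRel_adj _ _ _).2 ⟨?_, .inl ⟨hx, a, rfl⟩⟩)
    rintro rfl
    exact hS a hx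

lemma dependsOn_isJoinedCopy {S R : Finset (Fin n)} {τ : W → Fin n} (hτ : ∀ a, τ a ∈ R)
    (hSR : Disjoint S R) :
    DependsOn (· ∈ {ω | IsJoinedCopy (graphOf ω) F S τ})
      (edgesWithin (S ∪ R) \ edgesWithin S : Finset (EdgeType n)) := by
  intro ω ω' h
  have hadj : ∀ x ∈ S ∪ R, ∀ a, (graphOf ω).Adj x (τ a) ↔ (graphOf ω').Adj x (τ a) := by
    refine fun x hx a => graphOf_adj_congr fun hxa => h _ ?_
    have : τ a ∉ S := Finset.disjoint_right.1 hSR (hτ a)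
    simpa [edgesWithin, this, hτ a] using hx
  have hcomap : (graphOf ω).comap τ = (graphOf ω').comap τ := by
    ext a b
    exact hadj _ (Finset.mem_union_right _ (hτ a)) b
  refine propext (and_congr (by rw [hcomap]) (forall₂_congr fun x hx => forall_congr' fun a => ?_))
  exact hadj x (Finset.mem_union_left _ hx) a

variable [Fintype W]

lemma card_le_card_filter_notMem_tupleVertices_add_one {V : Type*} [DecidableEq V]
    (T : α × W ↪ V) (J : Finset α) (u : V) :
    J.card ≤ (J.filter fun i => u ∉ tupleVertices T {i}).card + 1 := by
  classical
  rw [← Finset.card_filter_add_card_filter_not (s := J) fun i => u ∉ tupleVertices T {i}]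
  refine Nat.add_le_add_left (Finset.card_le_one.2 fun i hi j hj => by_contra fun hij => ?_) _
  exact Finset.disjoint_left.1 (disjoint_tupleVertices (Finset.disjoint_singleton.2 hij))
    (not_not.1 (Finset.mem_filter.1 hi).2) (not_not.1 (Finset.mem_filter.1 hj).2)

lemma erMeasure_real_card_joinedCopies_le (hp0 : 0 ≤ p) (hp1 : p ≤ 1) {T : α × W ↪ Fin n}
    {J : Finset α} {S : Finset (Fin n)} (hS : Disjoint S (tupleVertices T J)) {N : ℕ}
    (hN : (S.card + Fintype.card W).choose 2 ≤ N) :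
    (erMeasure n p).real {ω | ((joinedCopies (graphOf ω) F T J S).card : ℝ) ≤
      min p (1 - p) ^ N / 2 * J.card} ≤ exp (-((min p (1 - p) ^ N) ^ 2 / 2 * J.card)) := by
  classical
  let E : α → Finset (EdgeType n) := fun i =>
    edgesWithin (S ∪ tupleVertices T {i}) \ edgesWithin S
  have hmem : ∀ i a, T (i, a) ∈ tupleVertices T {i} := fun i a =>
    mem_tupleVertices.2 ⟨i, Finset.mem_singleton_self i, a, rfl⟩
  have hdisj : ∀ i ∈ J, Disjoint S (tupleVertices T {i}) := fun i hi =>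
    hS.mono_right (Finset.map_subset_map.2
      (Finset.product_subset_product_left (Finset.singleton_subset_iff.2 hi)))
  have hE : (J : Set α).PairwiseDisjoint fun i => (E i : Set (EdgeType n)) := by
    intro i _ j _ hij
    refine Finset.disjoint_coe.2 (Finset.disjoint_left.2 fun e hi hj => ?_)
    have hmeet := (disjoint_tupleVertices (T := T) (Finset.disjoint_singleton.2 hij)).eq_bot
    simp only [E, Finset.mem_sdiff] at hi hj
    have := Finset.mem_inter.2 ⟨hi.1, hj.1⟩
    rw [← edgesWithin_inter, ← Finset.union_inter_distrib_left, ← Finset.inf_eq_inter, hmeet,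
      Finset.bot_eq_empty, Finset.union_empty] at this
    exact hi.2 this
  refine measureReal_pi_card_filter_le (S := fun i => (E i : Set (EdgeType n)))
    (fun i hi => dependsOn_isJoinedCopy (hmem i) (hdisj i hi)) hE
    (pow_nonneg (le_min hp0 (sub_nonneg.2 hp1)) N) fun i hi =>
      pow_le_erMeasure_real_of_dependsOn hp0 hp1
        (dependsOn_isJoinedCopy (hmem i) (hdisj i hi)) ?_ ?_
  · obtain ⟨Γ, hΓ⟩ := exists_isJoinedCopy (F := F) (S := S)
      ⟨fun a => T (i, a), fun a b h => (Prod.ext_iff.1 (T.injective h)).2⟩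
      fun a => Finset.disjoint_right.1 (hdisj i hi) (hmem i a)
    obtain ⟨ω, rfl⟩ := graphOf_surjective Γ
    exact ⟨ω, hΓ⟩
  · refine (Finset.card_le_card Finset.sdiff_subset).trans (le_trans ?_ hN)
    rw [card_edgesWithin, Finset.card_union_of_disjoint (hdisj i hi), card_tupleVertices,
      Finset.card_singleton, one_mul]

lemma erMeasure_real_exists_card_joinedCopies_lt_le (hp0 : 0 ≤ p) (hp1 : p ≤ 1)
    {T : α × W ↪ Fin n} {J : Finset α} {v : Fin n} (hv : v ∉ tupleVertices T J) {N : ℕ}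
    (hN : (2 + Fintype.card W).choose 2 ≤ N) {s : ℕ}
    (hs : s ≤ min p (1 - p) ^ N / 2 * (J.card - 1 : ℝ)) :
    (erMeasure n p).real
      {ω | ∃ u, u ≠ v ∧ (joinedCopies (graphOf ω) F T J {v, u}).card < s} ≤
        n * exp (-((min p (1 - p) ^ N) ^ 2 / 2 * (J.card - 1 : ℝ))) := by
  classical
  refine (measureReal_setOf_exists_le (A := fun u =>
    {ω | (joinedCopies (graphOf ω) F T J {v, u}).card < s}) (exp_pos _).le fun u hu => ?_).trans_eq
      (by rw [Fintype.card_fin])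
  set J' := J.filter fun i => u ∉ tupleVertices T {i}
  have hJ'J : J' ⊆ J := Finset.filter_subset _ _
  have hJ' : (J.card - 1 : ℝ) ≤ J'.card := by
    rw [sub_le_iff_le_add]
    exact_mod_cast card_le_card_filter_notMem_tupleVertices_add_one T J u
  have hdisj : Disjoint {v, u} (tupleVertices T J') := by
    simp only [Finset.disjoint_insert_left, Finset.disjoint_singleton_left, mem_tupleVertices,
      not_exists, not_and]
    refine ⟨fun i hi a h => hv (mem_tupleVertices.2 ⟨i, hJ'J hi, a, h⟩), fun i hi a h => ?_⟩
    exact (Finset.mem_filter.1 hi).2 (mem_tupleVertices.2 ⟨i, Finset.mem_singleton_self i, a, h⟩)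
  have : 0 ≤ min p (1 - p) := le_min hp0 (sub_nonneg.2 hp1)
  refine (measureReal_mono fun ω hω => ?_).trans
    ((erMeasure_real_card_joinedCopies_le (F := F) (N := N) hp0 hp1 hdisj
      (by rwa [Finset.card_pair hu.symm])).trans (exp_le_exp.2 (by gcongr)))
  have hmono : (joinedCopies (graphOf ω) F T J' {v, u}).card < s :=
    (Finset.card_le_card fun i hi => by
      obtain ⟨hiJ', hi⟩ := mem_joinedCopies.1 hi
      exact mem_joinedCopies.2 ⟨hJ'J hiJ', hi⟩).trans_lt hω
  exact (Nat.cast_le.2 hmono.le).trans (hs.trans (by gcongr))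

end FailureProbabilities

section FailureBound

variable {n : ℕ} {p δ : ℝ} {W : Type*} [Fintype W] [Nonempty W] {F : SimpleGraph W}

lemma exists_embedding_notMem_range {α : Type*} [Fintype α] (v : Fin n)
    (hα : Fintype.card α < n) : ∃ T : α ↪ Fin n, ∀ x, T x ≠ v := by
  obtain ⟨T⟩ := Function.Embedding.nonempty_of_card_le (α := α) (β := {u // u ≠ v})
    (by simp; lia)
  exact ⟨T.trans (.subtype _), fun x => (T x).2⟩

/-- The parameters of the construction of a factor of `k * t` stars in `G(n,p)`: `r` leaves per
greedy star, the sizes `s₀`, `s₁`, `d` of `IsStarRich`, the number `j` of greedy stars, and the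
numbers `M`, `M'` of candidate copies for matching the leftover vertices and for greedy centres.
The number `δ` bounds below the chance that a candidate is a copy. -/
structure FactorParameters (p δ : ℝ) (n k t : ℕ) where
  (r s₀ s₁ d j M M' : ℕ)
  s₀_pos : 0 < s₀
  r_le : r ≤ s₀
  pow_le : (1 / (1 - p)) ^ (r + 1) * ((r : ℝ) ^ 2 / s₀) ^ 2 ≤ 1
  overlap_le : (r + 1) * (1 / (1 - p) * ((r : ℝ) ^ 2 / s₀) ^ 2) ≤ 1 / (16 * n)
  s₀_le : s₀ ≤ p / 2 * s₁
  s₁_le : s₁ ≤ δ / 2 * (M - 1 : ℝ)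
  t_le : t ≤ δ / 2 * M'
  M_le : M ≤ t
  vertices_lt : (M + M') * k < n
  le_pairs : 3 * n ≤ p ^ 2 / 2 * (s₁ * d)
  le_matching : 2 * log n ≤ δ ^ 2 / 2 * (M - 1 : ℝ)
  le_greedy : log n ≤ δ ^ 2 / 2 * M'
  centers_le : M * k + (d + j) ≤ t * k
  le_leaves : n ≤ j * r

lemma FactorParameters.erMeasure_real_not_hasFactor_le {N t : ℕ} (hp0 : 0 ≤ p) (hp1 : p < 1)
    (hN : (2 + Fintype.card W).choose 2 ≤ N)
    (P : FactorParameters p (min p (1 - p) ^ N) n (Fintype.card W) t) (v : Fin n) :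
    (erMeasure n p).real
        {ω | ¬HasFactorWithInducedCenters (graphOf ω) F v (t * Fintype.card W)} ≤
      2 ^ n * exp (-(4 * n) + 1 / 2) + 4 ^ n * exp (-(p ^ 2 / 2 * (P.s₁ * P.d))) +
        n * exp (-((min p (1 - p) ^ N) ^ 2 / 2 * (P.M - 1 : ℝ))) +
        exp (-((min p (1 - p) ^ N) ^ 2 / 2 * P.M')) := by
  have hn : 0 < n := v.pos
  obtain ⟨T, hT⟩ := exists_embedding_notMem_range (α := (Fin P.M ⊕ Fin P.M') × W) v
    (by simpa using P.vertices_lt)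
  have hv : ∀ K, v ∉ tupleVertices T K := fun K hK => by
    obtain ⟨i, -, a, h⟩ := mem_tupleVertices.1 hK
    exact hT _ h
  let J : Finset (Fin P.M ⊕ Fin P.M') := Finset.univ.map .inl
  let J' : Finset (Fin P.M ⊕ Fin P.M') := Finset.univ.map .inr
  have hJ : J.card = P.M := by simp [J]
  have hJ' : J'.card = P.M' := by simp [J']
  have hJJ' : Disjoint J J' := by simp [J, J', Finset.disjoint_left]
  have hrich := erMeasure_real_not_isStarRich_le (n := n) (d := P.d) hp0 hp1 P.s₀_pos P.r_le
    (by positivity) P.pow_le P.overlap_le P.s₀_le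
  have hmatching := erMeasure_real_exists_card_joinedCopies_lt_le (F := F) hp0 hp1.le (hv J) hN
    (by simpa only [hJ] using P.s₁_le)
  have hgreedy := erMeasure_real_card_joinedCopies_le (F := F) hp0 hp1.le
    (Finset.disjoint_singleton_left.2 (hv J'))
    (N := N) ((Nat.choose_le_choose 2 (by simp)).trans hN)
  rw [hJ] at hmatching
  rw [hJ'] at hgreedy
  rw [show 1 / (4 * (1 / (16 * n) : ℝ)) = 4 * n by field_simp; norm_num] at hrich
  refine (measureReal_mono (fun ω hω => ?_) (measure_ne_top _ _)).trans
    ((measureReal_union_le _ _).trans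
      (add_le_add ((measureReal_union_le _ _).trans (add_le_add hrich hmatching)) hgreedy))
  by_contra hgood
  simp only [Set.mem_union, Set.mem_ofPred_eq, not_or, not_exists, not_and, not_lt, not_not,
    not_le] at hgood
  obtain ⟨⟨hrich, hmatching⟩, hgreedy⟩ := hgood
  exact hω (hrich.hasFactorWithInducedCenters hJJ' (hJ.trans_le P.M_le) hmatching
    (by exact_mod_cast P.t_le.trans hgreedy.le) (by simpa only [hJ] using P.centers_le)
    P.le_leaves)

lemma exp_neg_natCast_le (hn : 0 < n) : exp (-n) ≤ 1 / n := by
  rw [exp_neg, ← one_div]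
  exact one_div_le_one_div_of_le (by positivity) (by linarith [add_one_le_exp (n : ℝ)])

lemma two_pow_le_exp (n : ℕ) : (2 : ℝ) ^ n ≤ exp n := by
  have htwo : (2 : ℝ) ≤ exp 1 := by linarith [add_one_le_exp (1 : ℝ)]
  simpa [← exp_nat_mul] using pow_le_pow_left₀ zero_le_two htwo n

lemma two_pow_pow_mul_exp_le (hn : 0 < n) {j : ℕ} {x : ℝ} (hx : x ≤ -((j + 1) * n)) :
    ((2 : ℝ) ^ j) ^ n * exp x ≤ 1 / n := by
  calc ((2 : ℝ) ^ j) ^ n * exp x ≤ exp n ^ j * exp (-((j + 1) * n)) := by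
        rw [pow_right_comm]
        gcongr
        exact two_pow_le_exp n
    _ = exp (-n) := by rw [← exp_nat_mul, ← exp_add]; ring_nf
    _ ≤ 1 / n := exp_neg_natCast_le hn

lemma FactorParameters.erMeasure_real_not_hasFactor_le_div {N t : ℕ} (hp0 : 0 ≤ p) (hp1 : p < 1)
    (hN : (2 + Fintype.card W).choose 2 ≤ N)
    (P : FactorParameters p (min p (1 - p) ^ N) n (Fintype.card W) t) (v : Fin n) :
    (erMeasure n p).real
        {ω | ¬HasFactorWithInducedCenters (graphOf ω) F v (t * Fintype.card W)} ≤ 4 / n := by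
  have hn : 0 < n := v.pos
  have hrich : 2 ^ n * exp (-(4 * n) + 1 / 2) ≤ 1 / (n : ℝ) := by
    have hn1 : (1 : ℝ) ≤ n := by exact_mod_cast hn
    simpa using two_pow_pow_mul_exp_le hn (j := 1) (x := -(4 * n) + 1 / 2)
      (by push_cast; linarith)
  have hpairs : 4 ^ n * exp (-(p ^ 2 / 2 * (P.s₁ * P.d))) ≤ 1 / (n : ℝ) := by
    have h := two_pow_pow_mul_exp_le hn (j := 2) (x := -(p ^ 2 / 2 * (P.s₁ * P.d)))
      (by push_cast; linarith [P.le_pairs])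
    rwa [show (2 : ℝ) ^ 2 = 4 by norm_num] at h
  have hmatching : n * exp (-((min p (1 - p) ^ N) ^ 2 / 2 * (P.M - 1 : ℝ))) ≤ 1 / (n : ℝ) := by
    calc n * exp (-((min p (1 - p) ^ N) ^ 2 / 2 * (P.M - 1 : ℝ)))
        ≤ n * exp (-(2 * log n)) := by
          gcongr n * exp (-?_)
          exact P.le_matching
      _ = 1 / n := by
          rw [two_mul, neg_add, exp_add, exp_neg, exp_log (by positivity)]
          field_simp
  have hgreedy : exp (-((min p (1 - p) ^ N) ^ 2 / 2 * P.M')) ≤ 1 / (n : ℝ) := by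
    calc exp (-((min p (1 - p) ^ N) ^ 2 / 2 * P.M')) ≤ exp (-log n) :=
          exp_le_exp.2 (neg_le_neg P.le_greedy)
      _ = 1 / n := by rw [exp_neg, exp_log (by positivity), one_div]
  have htotal := P.erMeasure_real_not_hasFactor_le (F := F) hp0 hp1 hN v
  rw [show (4 : ℝ) / n = 1 / n + 1 / n + 1 / n + 1 / n by ring]
  linarith

end FailureBound

section Asymptotics

/-- The number `n / (2 * log_b n)` of stars in the factor, to first order; `b` stands for
`1 / (1 - p)`. -/
noncomputable def starCount (b : ℝ) (n : ℕ) : ℝ := n / (2 * logb b n)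

variable {b : ℝ}

lemma tendsto_logb_natCast (hb : 1 < b) : Tendsto (fun n : ℕ => logb b n) atTop atTop :=
  (tendsto_logb_atTop hb).comp tendsto_natCast_atTop_atTop

lemma eventually_lt_logb (hb : 1 < b) (C : ℝ) : ∀ᶠ n : ℕ in atTop, C < logb b n :=
  (tendsto_logb_natCast hb).eventually_gt_atTop C

lemma eventually_mul_logb_pow_le (b C : ℝ) (q : ℕ) {s : ℝ} (hs : 0 < s) :
    ∀ᶠ n : ℕ in atTop, C * logb b n ^ q ≤ (n : ℝ) ^ s := by
  have hlittle := ((isLittleO_log_rpow_rpow_atTop q hs).const_mul_left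
    (C / log b ^ q)).comp_tendsto tendsto_natCast_atTop_atTop
  filter_upwards [hlittle.bound one_pos] with n hn
  simp only [Function.comp_apply, rpow_natCast, norm_eq_abs, one_mul,
    abs_of_nonneg (rpow_nonneg n.cast_nonneg s)] at hn
  calc C * logb b n ^ q = C / log b ^ q * log n ^ q := by rw [logb, div_pow]; ring
    _ ≤ (n : ℝ) ^ s := (le_abs_self _).trans hn

lemma starCount_mul_logb {n : ℕ} (hn : 0 < logb b n) : 2 * (starCount b n * logb b n) = n := by
  rw [starCount]
  field_simp

lemma eventually_mul_logb_le_starCount (hb : 1 < b) (C : ℝ) :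
    ∀ᶠ n : ℕ in atTop, C * logb b n ≤ starCount b n := by
  filter_upwards [eventually_lt_logb hb 0, eventually_mul_logb_pow_le b (2 * C) 2 one_pos]
    with n hL hn
  rw [rpow_one] at hn
  exact le_of_mul_le_mul_right (by linarith [starCount_mul_logb hL]) hL

lemma tendsto_starCount (hb : 1 < b) : Tendsto (starCount b) atTop atTop := by
  refine tendsto_atTop.2 fun C => ?_
  filter_upwards [eventually_mul_logb_le_starCount hb |C|, eventually_lt_logb hb 1] with n hn hL
  nlinarith [le_abs_self C, abs_nonneg C]

lemma eventually_mul_le_starCount_sq (hb : 1 < b) (C : ℝ) :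
    ∀ᶠ n : ℕ in atTop, C * n ≤ starCount b n ^ 2 := by
  filter_upwards [eventually_mul_logb_le_starCount hb (2 * C), eventually_lt_logb hb 0,
    (tendsto_starCount hb).eventually_ge_atTop 0] with n hn hL hx
  rw [← starCount_mul_logb hL]
  nlinarith

lemma eventually_mul_le_floor_mul_sub_one {α : Type*} {l : Filter α} {f : α → ℝ}
    (hf : Tendsto f l atTop) {a c : ℝ} (hca : c < a) :
    ∀ᶠ x in l, c * f x ≤ (⌊a * f x⌋₊ : ℝ) - 1 := by
  filter_upwards [hf.eventually_ge_atTop (2 / (a - c))] with x hx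
  rw [div_le_iff₀ (sub_pos.2 hca)] at hx
  nlinarith [Nat.lt_floor_add_one (a * f x)]

lemma eventually_mul_le_floor_mul {α : Type*} {l : Filter α} {f : α → ℝ} (hf : Tendsto f l atTop)
    {a c : ℝ} (hca : c < a) : ∀ᶠ x in l, c * f x ≤ ⌊a * f x⌋₊ :=
  (eventually_mul_le_floor_mul_sub_one hf hca).mono fun _ h => h.trans (sub_le_self _ zero_le_one)

lemma eventually_sq_floor_div_floor_le (hb : 1 < b) {c e : ℝ} (hc : 0 < c) (he : 0 ≤ e)
    (he2 : e ≤ 2) :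
    ∀ᶠ n : ℕ in atTop, (⌊(2 - e) * logb b n⌋₊ : ℝ) ^ 2 / ⌊c * starCount b n⌋₊ ≤
      16 / c * logb b n ^ 3 / n := by
  filter_upwards [eventually_lt_logb hb 0, (tendsto_starCount hb).eventually_gt_atTop 0,
    eventually_mul_le_floor_mul (tendsto_starCount hb) (half_lt_self hc)] with n hL hx hs₀
  have hr : (⌊(2 - e) * logb b n⌋₊ : ℝ) ≤ 2 * logb b n :=
    (Nat.floor_le (mul_nonneg (sub_nonneg.2 he2) hL.le)).trans (by gcongr; linarith)
  calc (⌊(2 - e) * logb b n⌋₊ : ℝ) ^ 2 / ⌊c * starCount b n⌋₊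
      ≤ (2 * logb b n) ^ 2 / (c / 2 * starCount b n) := by gcongr
    _ = 16 / c * logb b n ^ 3 / n := by
        rw [starCount]
        field_simp
        norm_num

lemma eventually_pow_floor_mul_sq_le_one (hb : 1 < b) {c e : ℝ} (hc : 0 < c) (he : 0 < e)
    (he2 : e ≤ 2) :
    ∀ᶠ n : ℕ in atTop, b ^ (⌊(2 - e) * logb b n⌋₊ + 1) *
      ((⌊(2 - e) * logb b n⌋₊ : ℝ) ^ 2 / ⌊c * starCount b n⌋₊) ^ 2 ≤ 1 := by
  filter_upwards [eventually_sq_floor_div_floor_le hb hc he.le he2, eventually_lt_logb hb 0,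
    eventually_mul_logb_pow_le b (b * (16 / c) ^ 2) 6 he, eventually_gt_atTop 0]
    with n hratio hL hpow hn
  have hn : (0 : ℝ) < n := Nat.cast_pos.2 hn
  have hr : b ^ ⌊(2 - e) * logb b n⌋₊ ≤ (n : ℝ) ^ 2 / (n : ℝ) ^ e := by
    calc b ^ ⌊(2 - e) * logb b n⌋₊ = b ^ (⌊(2 - e) * logb b n⌋₊ : ℝ) := (rpow_natCast _ _).symm
      _ ≤ b ^ (logb b n * (2 - e)) := by
          rw [mul_comm]
          exact rpow_le_rpow_of_exponent_le hb.le (Nat.floor_le (by nlinarith))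
      _ = (n : ℝ) ^ 2 / (n : ℝ) ^ e := by
          rw [rpow_mul (by linarith), rpow_logb (by linarith) hb.ne' hn, rpow_sub hn, rpow_two]
  calc b ^ (⌊(2 - e) * logb b n⌋₊ + 1) *
        ((⌊(2 - e) * logb b n⌋₊ : ℝ) ^ 2 / ⌊c * starCount b n⌋₊) ^ 2
      ≤ (n : ℝ) ^ 2 / (n : ℝ) ^ e * b * (16 / c * logb b n ^ 3 / n) ^ 2 := by
        rw [pow_succ]
        gcongr
    _ = b * (16 / c) ^ 2 * logb b n ^ 6 / (n : ℝ) ^ e := by field_simp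
    _ ≤ 1 := div_le_one_of_le₀ hpow (by positivity)

lemma eventually_floor_mul_sq_le (hb : 1 < b) {c e : ℝ} (hc : 0 < c) (he : 0 ≤ e) (he2 : e ≤ 2) :
    ∀ᶠ n : ℕ in atTop, (⌊(2 - e) * logb b n⌋₊ + 1) *
      (b * ((⌊(2 - e) * logb b n⌋₊ : ℝ) ^ 2 / ⌊c * starCount b n⌋₊) ^ 2) ≤ 1 / (16 * n) := by
  filter_upwards [eventually_sq_floor_div_floor_le hb hc he he2, eventually_lt_logb hb 1,
    eventually_mul_logb_pow_le b (48 * b * (16 / c) ^ 2) 7 one_pos, eventually_gt_atTop 0]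
    with n hratio hL hpow hn
  have hr : (⌊(2 - e) * logb b n⌋₊ : ℝ) + 1 ≤ 3 * logb b n := by
    nlinarith [Nat.floor_le (a := (2 - e) * logb b n) (by nlinarith)]
  rw [rpow_one] at hpow
  calc (⌊(2 - e) * logb b n⌋₊ + 1) *
        (b * ((⌊(2 - e) * logb b n⌋₊ : ℝ) ^ 2 / ⌊c * starCount b n⌋₊) ^ 2)
      ≤ 3 * logb b n * (b * (16 / c * logb b n ^ 3 / n) ^ 2) := by gcongr
    _ = 48 * b * (16 / c) ^ 2 * logb b n ^ 7 / (16 * (n : ℝ) ^ 2) := by field_simp; norm_num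
    _ ≤ n / (16 * (n : ℝ) ^ 2) := by gcongr
    _ = 1 / (16 * n) := by field_simp

lemma eventually_mul_le_floor_mul_floor (hb : 1 < b) (C : ℝ) {a c : ℝ} (ha : 0 < a) (hc : 0 < c) :
    ∀ᶠ n : ℕ in atTop, C * n ≤ ⌊a * starCount b n⌋₊ * ⌊c * starCount b n⌋₊ := by
  filter_upwards [eventually_mul_le_starCount_sq hb (C / (a / 2 * (c / 2))),
    (tendsto_starCount hb).eventually_ge_atTop 0,
    eventually_mul_le_floor_mul (tendsto_starCount hb) (half_lt_self ha),
    eventually_mul_le_floor_mul (tendsto_starCount hb) (half_lt_self hc)] with n hn hx hxa hxc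
  calc C * n = a / 2 * (c / 2) * (C / (a / 2 * (c / 2)) * n) := by field_simp
    _ ≤ a / 2 * (c / 2) * starCount b n ^ 2 := by gcongr
    _ = a / 2 * starCount b n * (c / 2 * starCount b n) := by ring
    _ ≤ ⌊a * starCount b n⌋₊ * ⌊c * starCount b n⌋₊ := by gcongr

lemma eventually_mul_log_le_starCount (hb : 1 < b) (C : ℝ) :
    ∀ᶠ n : ℕ in atTop, C * log n ≤ starCount b n := by
  filter_upwards [eventually_mul_logb_le_starCount hb (C * log b)] with n hn
  rwa [mul_assoc, logb, mul_div_cancel₀ _ (log_pos hb).ne'] at hn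

/- The product of the leading coefficients exceeds two: `(1 + e / 2) * (2 - e / 5) > 2`. -/
lemma eventually_le_floor_mul_floor (hb : 1 < b) {e : ℝ} (he : 0 < e) (he1 : e ≤ 1) :
    ∀ᶠ n : ℕ in atTop, n ≤ ⌊(1 + e / 2) * starCount b n⌋₊ * ⌊(2 - e / 5) * logb b n⌋₊ := by
  filter_upwards [(tendsto_starCount hb).eventually_ge_atTop 0, eventually_lt_logb hb 0,
    eventually_mul_le_floor_mul (tendsto_starCount hb)
      (show 1 + 2 * e / 5 < 1 + e / 2 by linarith),
    eventually_mul_le_floor_mul (tendsto_logb_natCast hb)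
      (show 2 - 2 * e / 5 < 2 - e / 5 by linarith)] with n hx hL hj hr
  have hcoeff : 2 ≤ (1 + 2 * e / 5) * (2 - 2 * e / 5) := by nlinarith
  have hprod : (n : ℝ) ≤ ⌊(1 + e / 2) * starCount b n⌋₊ * ⌊(2 - e / 5) * logb b n⌋₊ := by
    calc (n : ℝ) = 2 * (starCount b n * logb b n) := (starCount_mul_logb hL).symm
      _ ≤ (1 + 2 * e / 5) * (2 - 2 * e / 5) * (starCount b n * logb b n) := by gcongr
      _ = (1 + 2 * e / 5) * starCount b n * ((2 - 2 * e / 5) * logb b n) := by ring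
      _ ≤ _ := mul_le_mul hj hr (mul_nonneg (by linarith) hL.le) (Nat.cast_nonneg _)
  exact_mod_cast hprod

lemma eventually_centers_le (hb : 1 < b) {e : ℝ} (he : 0 < e) {k : ℕ} (hk : 0 < k) :
    ∀ᶠ n : ℕ in atTop, ⌊e / (4 * k) * starCount b n⌋₊ * k +
        (⌊e / 8 * starCount b n⌋₊ + ⌊(1 + e / 2) * starCount b n⌋₊) ≤
      ⌊(1 + e) / k * starCount b n⌋₊ * k := by
  have : (0 : ℝ) < k := Nat.cast_pos.2 hk
  filter_upwards [(tendsto_starCount hb).eventually_ge_atTop 0,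
    eventually_mul_le_floor_mul (tendsto_starCount hb)
      (show (1 + 7 / 8 * e) / k < (1 + e) / k by gcongr; linarith)] with n hx ht
  have hM : (⌊e / (4 * k) * starCount b n⌋₊ : ℝ) ≤ e / (4 * k) * starCount b n :=
    Nat.floor_le (by positivity)
  have hd : (⌊e / 8 * starCount b n⌋₊ : ℝ) ≤ e / 8 * starCount b n := Nat.floor_le (by positivity)
  have hj : (⌊(1 + e / 2) * starCount b n⌋₊ : ℝ) ≤ (1 + e / 2) * starCount b n :=
    Nat.floor_le (by positivity)
  have hsum : (⌊e / (4 * k) * starCount b n⌋₊ * k +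
      (⌊e / 8 * starCount b n⌋₊ + ⌊(1 + e / 2) * starCount b n⌋₊) : ℝ) ≤
        ⌊(1 + e) / k * starCount b n⌋₊ * k := by
    calc _ ≤ e / (4 * k) * starCount b n * k +
          (e / 8 * starCount b n + (1 + e / 2) * starCount b n) := by gcongr
      _ = (1 + 7 / 8 * e) / k * starCount b n * k := by field_simp; ring
      _ ≤ _ := by gcongr
  exact_mod_cast hsum

lemma eventually_abs_floor_mul_sub_starCount_le (hb : 1 < b) {e : ℝ} (he : 0 < e) {k : ℕ}
    (hk : 0 < k) :
    ∀ᶠ n : ℕ in atTop,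
      |((⌊(1 + e) / k * starCount b n⌋₊ * k : ℕ) : ℝ) - starCount b n| ≤ e * starCount b n := by
  have hk : (0 : ℝ) < k := Nat.cast_pos.2 hk
  filter_upwards [(tendsto_starCount hb).eventually_ge_atTop 0,
    eventually_mul_le_floor_mul (tendsto_starCount hb)
      (show 1 / k < (1 + e) / k by gcongr; linarith)] with n hx hlower
  have hlower : starCount b n ≤ ⌊(1 + e) / k * starCount b n⌋₊ * k := by
    rwa [div_mul_eq_mul_div, one_mul, div_le_iff₀ hk] at hlower
  have hupper : ⌊(1 + e) / k * starCount b n⌋₊ * k ≤ (1 + e) * starCount b n := by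
    calc _ ≤ (1 + e) / k * starCount b n * k := by gcongr; exact Nat.floor_le (by positivity)
      _ = (1 + e) * starCount b n := by field_simp
  push_cast
  exact abs_le.2 ⟨by nlinarith, by linarith⟩

lemma eventually_mul_starCount_lt (hb : 1 < b) (C : ℝ) :
    ∀ᶠ n : ℕ in atTop, C * starCount b n < n := by
  filter_upwards [(tendsto_starCount hb).eventually_gt_atTop 0, eventually_lt_logb hb 0,
    eventually_lt_logb hb (C / 2)] with n hx hL hLC
  calc C * starCount b n < 2 * logb b n * starCount b n := by gcongr; linarith
    _ = 2 * (starCount b n * logb b n) := by ring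
    _ = n := starCount_mul_logb hL

lemma eventually_floor_add_floor_mul_lt (hb : 1 < b) {a a' : ℝ} (ha : 0 ≤ a) (ha' : 0 ≤ a')
    (k : ℕ) :
    ∀ᶠ n : ℕ in atTop, (⌊a * starCount b n⌋₊ + ⌊a' * starCount b n⌋₊) * k < n := by
  filter_upwards [(tendsto_starCount hb).eventually_ge_atTop 0,
    eventually_mul_starCount_lt hb ((a + a') * k)] with n hx hn
  have hsum : (⌊a * starCount b n⌋₊ + ⌊a' * starCount b n⌋₊) * k < (n : ℝ) := by
    calc _ ≤ (a * starCount b n + a' * starCount b n) * k := by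
          gcongr <;> exact Nat.floor_le (by positivity)
      _ = (a + a') * k * starCount b n := by ring
      _ < n := hn
  exact_mod_cast hsum

lemma eventually_floor_mul_logb_le_floor (hb : 1 < b) (C : ℝ) {a : ℝ} (ha : 0 < a) :
    ∀ᶠ n : ℕ in atTop, ⌊C * logb b n⌋₊ ≤ ⌊a * starCount b n⌋₊ := by
  filter_upwards [eventually_mul_logb_le_starCount hb (C / a)] with n hn
  rw [div_mul_eq_mul_div, div_le_iff₀' ha] at hn
  exact Nat.floor_mono hn

lemma eventually_floor_le_mul_floor_sub_one (hb : 1 < b) {a c q : ℝ} (ha : 0 ≤ a) (hq : 0 < q)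
    (hac : a < q * c) :
    ∀ᶠ n : ℕ in atTop, (⌊a * starCount b n⌋₊ : ℝ) ≤ q * (⌊c * starCount b n⌋₊ - 1) := by
  rw [← div_lt_iff₀' hq] at hac
  filter_upwards [(tendsto_starCount hb).eventually_ge_atTop 0,
    eventually_mul_le_floor_mul_sub_one (tendsto_starCount hb) hac] with n hx hn
  calc (⌊a * starCount b n⌋₊ : ℝ) ≤ a * starCount b n := Nat.floor_le (by positivity)
    _ = q * (a / q * starCount b n) := by field_simp
    _ ≤ q * (⌊c * starCount b n⌋₊ - 1) := by gcongr

lemma eventually_mul_log_le_mul_floor_sub_one (hb : 1 < b) (C : ℝ) {a q : ℝ} (ha : 0 < a)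
    (hq : 0 < q) :
    ∀ᶠ n : ℕ in atTop, C * log n ≤ q * (⌊a * starCount b n⌋₊ - 1) := by
  filter_upwards [eventually_mul_log_le_starCount hb (C / (q * (a / 2))),
    eventually_mul_le_floor_mul_sub_one (tendsto_starCount hb) (half_lt_self ha)] with n hn ha
  calc C * log n = q * (a / 2 * (C / (q * (a / 2)) * log n)) := by field_simp
    _ ≤ q * (a / 2 * starCount b n) := by gcongr
    _ ≤ q * (⌊a * starCount b n⌋₊ - 1) := by gcongr

/- Of the `(1 + e) * starCount b n` centres, at most `e / 4 * starCount b n` are reserved for the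
leftover vertices. More than `(1 + e / 2) * starCount b n` are needed to absorb all the leaves, and
`e / 8 * starCount b n` further ones guarantee that a centre of large degree is still available. -/
lemma eventually_exists_factorParameters {p δ e : ℝ} (hp0 : 0 < p) (hp1 : p < 1) (hδ : 0 < δ)
    (he : 0 < e) (he1 : e ≤ 1) {k : ℕ} (hk : 0 < k) :
    ∀ᶠ n : ℕ in atTop, ∃ t : ℕ,
      |((t * k : ℕ) : ℝ) - starCount (1 / (1 - p)) n| ≤ e * starCount (1 / (1 - p)) n ∧
      Nonempty (FactorParameters p δ n k t) := by
  have hb : 1 < 1 / (1 - p) := one_lt_one_div (sub_pos.2 hp1) (by linarith)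
  set b := 1 / (1 - p)
  have hkR : (0 : ℝ) < k := Nat.cast_pos.2 hk
  have hx := tendsto_starCount hb
  have ha : 0 < e / (4 * k) := by positivity
  obtain ⟨a', ha'⟩ := exists_gt ((1 + e) / k / (δ / 2))
  have ha'0 : 0 < a' := lt_trans (by positivity) ha'
  obtain ⟨c₁, hc₁, hc₁δ⟩ := exists_between (show 0 < δ / 2 * (e / (4 * k)) by positivity)
  obtain ⟨c₀, hc₀, hc₀p⟩ := exists_between (show 0 < p / 2 * c₁ by positivity)
  have hweaken {y q z : ℝ} (hq : 0 ≤ q) (h : y ≤ q * (z - 1)) : y ≤ q * z :=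
    h.trans (mul_le_mul_of_nonneg_left (sub_le_self z zero_le_one) hq)
  filter_upwards [hx.eventually_ge_atTop 0, eventually_abs_floor_mul_sub_starCount_le hb he hk,
    (tendsto_nat_floor_atTop.comp (hx.const_mul_atTop hc₀)).eventually_gt_atTop 0,
    eventually_floor_mul_logb_le_floor hb (2 - e / 5) hc₀,
    eventually_pow_floor_mul_sq_le_one hb hc₀ (e := e / 5) (by positivity) (by linarith),
    eventually_floor_mul_sq_le hb hc₀ (e := e / 5) (by positivity) (by linarith),
    eventually_floor_le_mul_floor_sub_one hb hc₀.le (half_pos hp0) hc₀p,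
    eventually_floor_le_mul_floor_sub_one hb hc₁.le (half_pos hδ) hc₁δ,
    eventually_floor_le_mul_floor_sub_one hb (by positivity) (half_pos hδ)
      ((div_lt_iff₀' (half_pos hδ)).1 ha'),
    eventually_floor_add_floor_mul_lt hb ha.le ha'0.le k,
    eventually_mul_le_floor_mul_floor hb (3 / (p ^ 2 / 2)) hc₁ (show 0 < e / 8 by positivity),
    eventually_mul_log_le_mul_floor_sub_one hb 2 ha (half_pos (pow_pos hδ 2)),
    eventually_mul_log_le_mul_floor_sub_one hb 1 ha'0 (half_pos (pow_pos hδ 2)),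
    eventually_centers_le hb he hk, eventually_le_floor_mul_floor hb he he1]
    with n hx habs s₀_pos r_le pow_le overlap_le s₀_le s₁_le t_le vertices_lt hpairs le_matching
      hgreedy centers_le le_leaves
  rw [div_mul_eq_mul_div, div_le_iff₀' (by positivity)] at hpairs
  rw [one_mul] at hgreedy
  exact ⟨_, habs, ⟨{
    r := ⌊(2 - e / 5) * logb b n⌋₊
    s₀ := ⌊c₀ * starCount b n⌋₊
    s₁ := ⌊c₁ * starCount b n⌋₊
    d := ⌊e / 8 * starCount b n⌋₊
    j := ⌊(1 + e / 2) * starCount b n⌋₊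
    M := ⌊e / (4 * k) * starCount b n⌋₊
    M' := ⌊a' * starCount b n⌋₊
    s₀_le := hweaken (half_pos hp0).le s₀_le
    t_le := hweaken (half_pos hδ).le t_le
    M_le := Nat.floor_mono (by gcongr <;> linarith)
    le_pairs := hpairs
    le_greedy := hweaken (by positivity) hgreedy
    s₀_pos, r_le, pow_le, overlap_le, s₁_le, vertices_lt, le_matching, centers_le, le_leaves }⟩⟩

end Asymptotics

lemma tendsto_measure_nhds_one_of_real_compl_le {Ω : ℕ → Type*} [∀ n, MeasurableSpace (Ω n)]
    {μ : ∀ n, Measure (Ω n)} [∀ n, IsProbabilityMeasure (μ n)] {A : ∀ n, Set (Ω n)} {f : ℕ → ℝ}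
    (hf : Tendsto f atTop (nhds 0)) (hA : ∀ᶠ n in atTop, (μ n).real (A n)ᶜ ≤ f n) :
    Tendsto (fun n => μ n (A n)) atTop (nhds 1) := by
  have hreal : Tendsto (fun n => (μ n).real (A n)) atTop (nhds 1) := by
    refine tendsto_of_tendsto_of_tendsto_of_le_of_le' (by simpa using hf.const_sub 1)
      tendsto_const_nhds ?_ (.of_forall fun n => measureReal_le_one)
    filter_upwards [hA] with n hn
    have hunion := measureReal_union_le (μ := μ n) (A n) (A n)ᶜ
    rw [Set.union_compl_self, probReal_univ] at hunion
    linarith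
  simpa [ofReal_measureReal] using ENNReal.tendsto_ofReal hreal

theorem one_factor_with_cycle_factor_general {W : Type*} [Finite W] [Nonempty W]
    (F : SimpleGraph W) {p : ℝ} (hp0 : 0 < p) (hp1 : p < 1) {ε : ℝ} (hε : 0 < ε) :
    Tendsto (fun n : ℕ =>
      erMeasure n p {ω | ∀ hn : 0 < n,
        ∃ (ℓ : ℕ) (c : Fin ℓ → Fin n) (L : Fin ℓ → Set (Fin n)),
          IsStarFactor (graphOf ω) ⟨0, hn⟩ ℓ c L ∧
          |(ℓ : ℝ) - n / (2 * Real.logb (1 / (1 - p)) n)|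
            ≤ ε * (n / (2 * Real.logb (1 / (1 - p)) n)) ∧
          HasInducedFactorOn (graphOf ω) F (Set.range c)})
      atTop (nhds 1) := by
  have := Fintype.ofFinite W
  have hδ : 0 < min p (1 - p) ^ (2 + Fintype.card W).choose 2 :=
    pow_pos (lt_min hp0 (sub_pos.2 hp1)) _
  have hb : 1 < 1 / (1 - p) := one_lt_one_div (sub_pos.2 hp1) (by linarith)
  refine tendsto_measure_nhds_one_of_real_compl_le (tendsto_const_div_atTop_nhds_zero_nat 4) ?_
  filter_upwards [(tendsto_starCount hb).eventually_ge_atTop 0, eventually_gt_atTop 0,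
    eventually_exists_factorParameters hp0 hp1 hδ (lt_min hε one_pos) (min_le_right ε 1)
      (Fintype.card_pos (α := W))] with n hx hn ⟨t, ht, ⟨P⟩⟩
  refine le_trans (measureReal_mono ?_ (measure_ne_top _ _))
    (P.erMeasure_real_not_hasFactor_le_div (F := F) hp0.le hp1 le_rfl ⟨0, hn⟩)
  rintro ω hω ⟨c, L, hcL, hF⟩
  exact hω fun _ => ⟨_, c, L, hcL, ht.trans (mul_le_mul_of_nonneg_right (min_le_left ε 1) hx), hF⟩

/-- For fixed `p ∈ (0,1)` and `m ≥ 5`, whp `G(n,p)` has a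
`1`-factor `{S_1,…,S_ℓ}` with `ℓ = (n/(2·log_{1/(1−p)} n))·(1+o(1))` whose set of
central vertices induces a subgraph containing an induced `C_{m−2}`-factor.
(Vertex `1` is the vertex `⟨0, _⟩ : Fin n`; the `o(1)` is rendered by `ε > 0`.) -/
theorem one_factor_with_cycle_factor (p : ℝ) (hp0 : 0 < p) (hp1 : p < 1)
    (m : ℕ) (hm : 5 ≤ m) (ε : ℝ) (hε : 0 < ε) :
    Tendsto (fun n : ℕ =>
      erMeasure n p {ω | ∀ hn : 0 < n,
        ∃ (ℓ : ℕ) (c : Fin ℓ → Fin n) (L : Fin ℓ → Set (Fin n)),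
          IsStarFactor (graphOf ω) ⟨0, hn⟩ ℓ c L ∧
          |(ℓ : ℝ) - n / (2 * Real.logb (1 / (1 - p)) n)|
            ≤ ε * (n / (2 * Real.logb (1 / (1 - p)) n)) ∧
          HasInducedCycleFactorOn (graphOf ω) (m - 2) (Set.range c)})
      atTop (nhds 1) := by
  have : NeZero (m - 2) := ⟨by lia⟩
  exact one_factor_with_cycle_factor_general (cycGraph (m - 2)) hp0 hp1 hε
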